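/- arXiv:1404.3170 — 3 statements merged into one kernel-verified Lean document; each statement's English description precedes it below -/
import Mathlib

section
/- Let ε = exp(2πi/5) and let S = [[ε³,0],[0,ε²]] and V = [[0,−1],[1,0]] in SL(2,ℂ). There exists a finite subgroup G of SL(2,ℂ) of order 120 (the binary icosahedral group) containing both S and V such that every element A ∈ G leaves all three icosahedral forms invariant: F(A·(x,y)) = F(x,y), H(A·(x,y)) = H(x,y), and T(A·(x,y)) = T(x,y) for all A ∈ G. -/
open MvPolynomial

/-- Substitution of the linear map given by a 2×2 matrix `A` into a two-variable
polynomial: `G(A·(x,y)) = G(ax+by, cx+dy)`. -/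
noncomputable def subst (A : Matrix (Fin 2) (Fin 2) ℂ) (G : MvPolynomial (Fin 2) ℂ) :
    MvPolynomial (Fin 2) ℂ :=
  aeval (fun i => C (A i 0) * X 0 + C (A i 1) * X 1) G

/-- The fifth root of unity `ε = exp(2πi/5)`. -/
noncomputable def ε : ℂ := Complex.exp (2 * (Real.pi : ℂ) * Complex.I / 5)

/-- The diagonal icosahedral generator `S = [[ε³,0],[0,ε²]] ∈ SL(2,ℂ)`. -/
noncomputable def Smat : Matrix (Fin 2) (Fin 2) ℂ := !![ε ^ 3, 0; 0, ε ^ 2]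

/-- The quarter-turn generator `V = [[0,−1],[1,0]] ∈ SL(2,ℂ)`. -/
noncomputable def Vmat : Matrix (Fin 2) (Fin 2) ℂ := !![0, -1; 1, 0]

/-- Klein's degree-12 icosahedral form `F(x,y) = x·y·(x^10 − 11x^5y^5 − y^10)`. -/
noncomputable def F : MvPolynomial (Fin 2) ℂ :=
  X 0 * X 1 * ((X 0) ^ 10 - 11 * (X 0) ^ 5 * (X 1) ^ 5 - (X 1) ^ 10)

/-- Klein's degree-20 icosahedral form `H`. -/
noncomputable def H : MvPolynomial (Fin 2) ℂ :=
  (X 0) ^ 20 + 228 * (X 0) ^ 15 * (X 1) ^ 5 + 494 * (X 0) ^ 10 * (X 1) ^ 10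
    - 228 * (X 0) ^ 5 * (X 1) ^ 15 + (X 1) ^ 20

/-- Klein's degree-30 icosahedral form `T`. -/
noncomputable def T : MvPolynomial (Fin 2) ℂ :=
  (X 0) ^ 30 - 522 * (X 0) ^ 25 * (X 1) ^ 5 - 10005 * (X 0) ^ 20 * (X 1) ^ 10
    - 10005 * (X 0) ^ 10 * (X 1) ^ 20 + 522 * (X 0) ^ 5 * (X 1) ^ 25 + (X 1) ^ 30

/-!
The stabilizer of `F` in `SL(2, ℂ)` is itself the binary icosahedral group. It preserves `H` and
`T`, which up to constant factors are the Hessian of `F` and the Jacobian of `F` and `H`. Its order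
comes from its Möbius action on the twelve zeros of `F`, the vertices `∞`, `0` and the ten `z` with
`z¹⁰ - 11 z⁵ - 1 = 0`. The stabilizer of `∞` consists of the ten matrices `diag(a, a⁻¹)` with
`a¹⁰ = 1`, so the order is `12 * 10` once the action on the zeros is transitive. Every nonzero
finite zero is a fifth root of unity times a root `w` of `w² = w + 1`, and a half turn takes `∞`
to `w`: it exchanges, up to scalars, the quadratic forms `xy` and `x² - xy - y²`, and `F` is a
sextic form in these two that is invariant under the exchange.
-/

open scoped MatrixGroups OnePoint

section Substitution

variable (A B : Matrix (Fin 2) (Fin 2) ℂ) (P : MvPolynomial (Fin 2) ℂ)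

theorem eval_subst (v : Fin 2 → ℂ) : eval v (subst A P) = eval (A.mulVec v) P := by
  rw [subst, ← coe_aeval_eq_eval, RingHom.coe_coe, ← AlgHom.comp_apply, comp_aeval,
    ← coe_aeval_eq_eval, RingHom.coe_coe]
  congr 2
  funext i
  fin_cases i <;> simp

theorem subst_one : subst 1 P = P :=
  MvPolynomial.funext fun v => by rw [eval_subst, Matrix.one_mulVec]

theorem subst_mul : subst (A * B) P = subst B (subst A P) :=
  MvPolynomial.funext fun v => by simp only [eval_subst, Matrix.mulVec_mulVec]

theorem subst_C_mul (r : ℂ) : subst A (C r * P) = C r * subst A P := by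
  rw [subst, map_mul, aeval_C, algebraMap_eq, ← subst]

theorem pderiv_subst (j : Fin 2) :
    pderiv j (subst A P) =
      C (A 0 j) * subst A (pderiv 0 P) + C (A 1 j) * subst A (pderiv 1 P) := by
  unfold subst
  induction P using MvPolynomial.induction_on with
  | C a => simp
  | add p q hp hq => simp only [map_add, hp, hq]; ring
  | mul_X p i hp =>
    simp only [map_mul, Derivation.leibniz, hp, smul_eq_mul, map_add, aeval_X]
    fin_cases i <;> fin_cases j <;>
      simp only [Fin.zero_eta, Fin.mk_one, pderiv_X_self, pderiv_X_of_ne one_ne_zero,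
        pderiv_X_of_ne zero_ne_one, pderiv_C, map_one, map_zero] <;>
      ring

/-- The subgroup of `SL(2, ℂ)` of substitutions that leave the form `P` invariant. -/
def formStabilizer : Subgroup SL(2, ℂ) where
  carrier := {A | subst A P = P}
  one_mem' := subst_one P
  mul_mem' {A B} (hA : subst A P = P) (hB : subst B P = P) := by
    rw [Set.mem_ofPred_eq, Matrix.SpecialLinearGroup.coe_mul, subst_mul, hA, hB]
  inv_mem' {A} (hA : subst A P = P) := by
    rw [Set.mem_ofPred_eq, ← hA, ← subst_mul, ← Matrix.SpecialLinearGroup.coe_mul,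
      mul_inv_cancel, Matrix.SpecialLinearGroup.coe_one, subst_one, hA]

variable {P} in
theorem mem_formStabilizer {A : SL(2, ℂ)} : A ∈ formStabilizer P ↔ subst A P = P := Iff.rfl

variable {P} in
theorem mem_formStabilizer_iff_eval {A : SL(2, ℂ)} :
    A ∈ formStabilizer P ↔ ∀ x y : ℂ,
      eval ![A 0 0 * x + A 0 1 * y, A 1 0 * x + A 1 1 * y] P = eval ![x, y] P := by
  rw [mem_formStabilizer, MvPolynomial.funext_iff]
  simp [eval_subst, (finTwoArrowEquiv ℂ).symm.forall_congr_right.symm]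

end Substitution

section Covariants

/-- The Hessian determinant of a two-variable polynomial, a quadratic covariant of it. -/
noncomputable def hessianDet {R : Type*} [CommRing R] (P : MvPolynomial (Fin 2) R) :
    MvPolynomial (Fin 2) R :=
  pderiv 0 (pderiv 0 P) * pderiv 1 (pderiv 1 P) - pderiv 0 (pderiv 1 P) * pderiv 1 (pderiv 0 P)

/-- The Jacobian determinant of two two-variable polynomials, a bilinear covariant of them. -/
noncomputable def jacobianDet {R : Type*} [CommRing R] (P Q : MvPolynomial (Fin 2) R) :
    MvPolynomial (Fin 2) R :=
  pderiv 0 P * pderiv 1 Q - pderiv 1 P * pderiv 0 Q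

theorem hessianDet_subst (A : Matrix (Fin 2) (Fin 2) ℂ) (P : MvPolynomial (Fin 2) ℂ) :
    hessianDet (subst A P) = C (A.det ^ 2) * subst A (hessianDet P) := by
  simp only [hessianDet, pderiv_subst, Matrix.det_fin_two, map_add, pderiv_C_mul]
  simp only [subst, map_sub, map_mul, map_pow]
  ring

theorem jacobianDet_subst (A : Matrix (Fin 2) (Fin 2) ℂ) (P Q : MvPolynomial (Fin 2) ℂ) :
    jacobianDet (subst A P) (subst A Q) = C A.det * subst A (jacobianDet P Q) := by
  simp only [jacobianDet, pderiv_subst, Matrix.det_fin_two]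
  simp only [subst, map_sub, map_mul]
  ring

theorem pderiv_ofNat {R σ : Type*} [CommSemiring R] (i : σ) (n : ℕ) [n.AtLeastTwo] :
    pderiv i (ofNat(n) : MvPolynomial σ R) = 0 :=
  (pderiv i).map_natCast n

theorem pderiv_zero_F :
    pderiv 0 F = 11 * X 0 ^ 10 * X 1 - 66 * X 0 ^ 5 * X 1 ^ 6 - X 1 ^ 11 := by
  simp only [F, map_sub, Derivation.leibniz, Derivation.leibniz_pow, pderiv_X_self,
    pderiv_X_of_ne one_ne_zero, pderiv_ofNat, smul_eq_mul]
  ring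

theorem pderiv_one_F :
    pderiv 1 F = X 0 ^ 11 - 66 * X 0 ^ 6 * X 1 ^ 5 - 11 * X 0 * X 1 ^ 10 := by
  simp only [F, map_sub, Derivation.leibniz, Derivation.leibniz_pow, pderiv_X_self,
    pderiv_X_of_ne zero_ne_one, pderiv_ofNat, smul_eq_mul]
  ring

theorem pderiv_zero_H :
    pderiv 0 H = 20 * X 0 ^ 19 + 3420 * X 0 ^ 14 * X 1 ^ 5 + 4940 * X 0 ^ 9 * X 1 ^ 10 -
      1140 * X 0 ^ 4 * X 1 ^ 15 := by
  simp only [H, map_sub, map_add, Derivation.leibniz, Derivation.leibniz_pow, pderiv_X_self,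
    pderiv_X_of_ne one_ne_zero, pderiv_ofNat, smul_eq_mul]
  ring

theorem pderiv_one_H :
    pderiv 1 H = 1140 * X 0 ^ 15 * X 1 ^ 4 + 4940 * X 0 ^ 10 * X 1 ^ 9 -
      3420 * X 0 ^ 5 * X 1 ^ 14 + 20 * X 1 ^ 19 := by
  simp only [H, map_sub, map_add, Derivation.leibniz, Derivation.leibniz_pow, pderiv_X_self,
    pderiv_X_of_ne zero_ne_one, pderiv_ofNat, smul_eq_mul]
  ring

theorem hessianDet_F : hessianDet F = C (-121) * H := by
  simp only [hessianDet, pderiv_zero_F, pderiv_one_F, H, map_sub, Derivation.leibniz,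
    Derivation.leibniz_pow, pderiv_X_self, pderiv_X_of_ne one_ne_zero,
    pderiv_X_of_ne zero_ne_one, pderiv_ofNat, smul_eq_mul, map_neg, map_ofNat]
  ring

theorem jacobianDet_F_H : jacobianDet F H = C (-20) * T := by
  rw [jacobianDet, pderiv_zero_F, pderiv_one_F, pderiv_zero_H, pderiv_one_H, T, map_neg,
    map_ofNat]
  ring

variable {A : SL(2, ℂ)}

theorem subst_H_of_subst_F (hF : subst A F = F) : subst A H = H := by
  have h := hessianDet_subst A F
  rw [hF, hessianDet_F, A.det_coe, one_pow, C_1, one_mul, subst_C_mul] at h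
  exact (mul_left_cancel₀ (by simp) h).symm

theorem subst_T_of_subst_F (hF : subst A F = F) : subst A T = T := by
  have h := jacobianDet_subst A F H
  rw [hF, subst_H_of_subst_F hF, jacobianDet_F_H, A.det_coe, C_1, one_mul, subst_C_mul] at h
  exact (mul_left_cancel₀ (by simp) h).symm

end Covariants

section Generators

theorem eval_F (x y : ℂ) : eval ![x, y] F = x * y * (x ^ 10 - 11 * x ^ 5 * y ^ 5 - y ^ 10) := by
  simp [F]

/-- The diagonal torus `a ↦ diag(a, a⁻¹)` of `SL(2, K)`, the group fixing `0` and `∞`. -/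
noncomputable def diagonalTorus {K : Type*} [Field K] : Kˣ →* SL(2, K) where
  toFun a := Matrix.SpecialLinearGroup.diag2 (a : K) a.ne_zero
  map_one' := Subtype.ext <| by simp [Matrix.SpecialLinearGroup.diag2_coe', Matrix.one_fin_two]
  map_mul' a b := Subtype.ext <| by
    simp [Matrix.SpecialLinearGroup.diag2_coe', mul_comm]

theorem coe_diagonalTorus {K : Type*} [Field K] (a : Kˣ) :
    (diagonalTorus a : Matrix (Fin 2) (Fin 2) K) = !![(a : K), 0; 0, (a : K)⁻¹] :=
  Matrix.SpecialLinearGroup.diag2_coe' a.ne_zero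

theorem diagonalTorus_injective {K : Type*} [Field K] :
    Function.Injective (diagonalTorus (K := K)) := fun a b h => by
  have := congrArg (fun A : SL(2, K) => A 0 0) h
  simpa [coe_diagonalTorus, Units.ext_iff] using this

theorem diagonalTorus_mem_formStabilizer_F {a : ℂˣ} (ha : a ^ 10 = 1) :
    diagonalTorus a ∈ formStabilizer F := by
  have ha' : (a : ℂ) ^ 10 = 1 := by rw [← Units.val_pow_eq_pow_val, ha, Units.val_one]
  rw [mem_formStabilizer_iff_eval]
  intro x y
  have hx : (a * x) ^ 10 = x ^ 10 := by rw [mul_pow, ha', one_mul]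
  have hy : ((a : ℂ)⁻¹ * y) ^ 10 = y ^ 10 := by rw [mul_pow, inv_pow, ha', inv_one, one_mul]
  have hxy : a * x * ((a : ℂ)⁻¹ * y) = x * y := by
    rw [mul_mul_mul_comm, mul_inv_cancel₀ a.ne_zero, one_mul]
  simp only [coe_diagonalTorus, eval_F, Matrix.of_apply, Matrix.cons_val', Matrix.cons_val_zero,
    Matrix.cons_val_one, Matrix.cons_val_fin_one, zero_mul, add_zero, zero_add]
  rw [mul_assoc 11, ← mul_pow, hx, hy, hxy, mul_pow, ← mul_assoc]

theorem ε_pow_five : ε ^ 5 = 1 := by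
  have h := (Complex.isPrimitiveRoot_exp 5 (by norm_num)).pow_eq_one
  rwa [Nat.cast_ofNat] at h

theorem exists_mem_formStabilizer_F_coe_eq_Smat :
    ∃ S ∈ formStabilizer F, (S : Matrix (Fin 2) (Fin 2) ℂ) = Smat := by
  have hε : ε ^ 3 * ε ^ 2 = 1 := by rw [← pow_add, ε_pow_five]
  obtain ⟨a, ha⟩ : IsUnit (ε ^ 3) := .of_mul_eq_one _ hε
  refine ⟨diagonalTorus a, diagonalTorus_mem_formStabilizer_F (Units.ext ?_), ?_⟩
  · rw [Units.val_pow_eq_pow_val, ha, ← pow_mul, show 3 * 10 = 5 * 6 from rfl, pow_mul,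
      ε_pow_five, one_pow, Units.val_one]
  · rw [coe_diagonalTorus, ha, inv_eq_of_mul_eq_one_right hε, Smat]

/-- The quarter turn `V` as an element of `SL(2, ℂ)`. -/
noncomputable def V : SL(2, ℂ) := ⟨Vmat, by simp [Vmat, Matrix.det_fin_two_of]⟩

theorem V_mem_formStabilizer_F : V ∈ formStabilizer F := by
  rw [mem_formStabilizer_iff_eval]
  intro x y
  simp only [V, Vmat, eval_F, Matrix.of_apply, Matrix.cons_val', Matrix.cons_val_zero,
    Matrix.cons_val_one, Matrix.cons_val_fin_one]
  ring

/-- Klein's form `F` as a polynomial in `m = xy` and `q = x² - xy - y²`. -/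
def kleinSextic {R : Type*} [CommRing R] (m q : R) : R :=
  m * q * (q ^ 4 + 5 * q ^ 3 * m + 15 * q ^ 2 * m ^ 2 + 25 * q * m ^ 3 + 25 * m ^ 4)

theorem eval_F_eq_kleinSextic (x y : ℂ) :
    eval ![x, y] F = kleinSextic (x * y) (x ^ 2 - x * y - y ^ 2) := by
  rw [eval_F, kleinSextic]
  ring

theorem kleinSextic_swap {R : Type*} [CommRing R] {c : R} (hc : 5 * c ^ 2 = 1) (m q : R) :
    kleinSextic (c * q) (5 * c * m) = kleinSextic m q := by
  calc kleinSextic (c * q) (5 * c * m) = (5 * c ^ 2) ^ 3 * kleinSextic m q := by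
        simp only [kleinSextic]; ring
    _ = kleinSextic m q := by rw [hc, one_pow, one_mul]

/-- The half turn of the sphere exchanging `∞` with `w`; it preserves the icosahedron when
`w² = w + 1`. The factor `l` normalizes its determinant. -/
def vertexHalfTurn {R : Type*} [CommRing R] (w l : R) (hl : l ^ 2 * (w ^ 2 + 1) = -1) :
    SL(2, R) :=
  ⟨!![l * w, l; l, -(l * w)], by rw [Matrix.det_fin_two_of]; linear_combination -hl⟩

theorem vertexHalfTurn_mem_formStabilizer_F {w l : ℂ} (hw : w ^ 2 = w + 1)
    (hl : l ^ 2 * (w ^ 2 + 1) = -1) : vertexHalfTurn w l hl ∈ formStabilizer F := by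
  have hc : 5 * (l ^ 2 * w) ^ 2 = 1 := by
    have hw5 : (w ^ 2 + 1) ^ 2 = 5 * w ^ 2 := by linear_combination (w ^ 2 + w - 1) * hw
    linear_combination (l ^ 2 * (w ^ 2 + 1) - 1) * hl - l ^ 4 * hw5
  rw [mem_formStabilizer_iff_eval]
  intro x y
  have hm : (l * w * x + l * y) * (l * x + -(l * w) * y) =
      l ^ 2 * w * (x ^ 2 - x * y - y ^ 2) := by
    linear_combination (-l ^ 2 * x * y) * hw
  have hq : (l * w * x + l * y) ^ 2 - (l * w * x + l * y) * (l * x + -(l * w) * y) -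
      (l * x + -(l * w) * y) ^ 2 = 5 * (l ^ 2 * w) * (x * y) := by
    linear_combination (l ^ 2 * (x ^ 2 + x * y - y ^ 2)) * hw
  calc eval ![l * w * x + l * y, l * x + -(l * w) * y] F
      = kleinSextic (l ^ 2 * w * (x ^ 2 - x * y - y ^ 2)) (5 * (l ^ 2 * w) * (x * y)) := by
        rw [eval_F_eq_kleinSextic, hq, hm]
    _ = eval ![x, y] F := by rw [kleinSextic_swap hc, eval_F_eq_kleinSextic]

end Generators

section MoebiusAction

/-- Möbius transformations: `SL(2, K)` acts on `OnePoint K` through `GL(2, K)`. -/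
local instance {K : Type*} [Field K] [DecidableEq K] : MulAction SL(2, K) (OnePoint K) :=
  MulAction.compHom _ Matrix.SpecialLinearGroup.toGL

theorem smul_infty_eq_ite {K : Type*} [Field K] [DecidableEq K] (A : SL(2, K)) :
    A • (∞ : OnePoint K) = if A 1 0 = 0 then ∞ else ((A 0 0 / A 1 0 : K) : OnePoint K) :=
  OnePoint.smul_infty_eq_ite (Matrix.SpecialLinearGroup.toGL A)

theorem smul_infty_eq_self_iff {K : Type*} [Field K] [DecidableEq K] {A : SL(2, K)} :
    A • (∞ : OnePoint K) = ∞ ↔ A 1 0 = 0 :=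
  OnePoint.smul_infty_eq_self_iff (g := Matrix.SpecialLinearGroup.toGL A)

theorem diagonalTorus_smul_coe {K : Type*} [Field K] [DecidableEq K] (a : Kˣ) (z : K) :
    diagonalTorus a • (z : OnePoint K) = ((a ^ 2 * z : K) : OnePoint K) := by
  change Matrix.SpecialLinearGroup.toGL (diagonalTorus a) • (z : OnePoint K) = _
  rw [OnePoint.smul_some_eq_ite]
  simp [coe_diagonalTorus, pow_two, mul_right_comm]

theorem mem_map_diagonalTorus_of_upperTriangular {A : SL(2, ℂ)} (hF : A ∈ formStabilizer F)
    (hA : A 1 0 = 0) : A ∈ (rootsOfUnity 10 ℂ).map diagonalTorus := by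
  have hdet : A 0 0 * A 1 1 = 1 := by
    have := A.det_coe
    rwa [Matrix.det_fin_two, hA, mul_zero, sub_zero] at this
  have ha : A 0 0 ≠ 0 := left_ne_zero_of_mul_eq_one hdet
  have hFy : eval ![1, 0] (pderiv 1 (subst A F)) = eval ![1, 0] (pderiv 1 F) :=
    congrArg (fun P => eval ![1, 0] (pderiv 1 P)) hF
  have hHy : eval ![1, 0] (pderiv 1 (subst A H)) = eval ![1, 0] (pderiv 1 H) :=
    congrArg (fun P => eval ![1, 0] (pderiv 1 P)) (subst_H_of_subst_F hF)
  have hb : A 0 1 = 0 := by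
    simpa [pderiv_subst, eval_subst, pderiv_zero_H, pderiv_one_H, hA, ha] using hHy
  have hd : A 1 1 * A 0 0 ^ 11 = 1 := by
    simpa [pderiv_subst, eval_subst, pderiv_zero_F, pderiv_one_F, hA, hb] using hFy
  have ha10 : A 0 0 ^ 10 = 1 := by linear_combination hd - A 0 0 ^ 10 * hdet
  refine ⟨Units.mk0 _ ha, Units.ext ha10, Subtype.ext ?_⟩
  rw [coe_diagonalTorus, Units.val_mk0, inv_eq_of_mul_eq_one_right hdet]
  conv_rhs => rw [Matrix.eta_fin_two (A : Matrix (Fin 2) (Fin 2) ℂ), hA, hb]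

theorem map_subtype_stabilizer_infty :
    (MulAction.stabilizer (formStabilizer F) (∞ : OnePoint ℂ)).map (formStabilizer F).subtype =
      (rootsOfUnity 10 ℂ).map diagonalTorus := by
  ext A
  constructor
  · rintro ⟨⟨A, hF⟩, hA, rfl⟩
    exact mem_map_diagonalTorus_of_upperTriangular hF (smul_infty_eq_self_iff.mp hA)
  · rintro ⟨a, ha, rfl⟩
    refine ⟨⟨_, diagonalTorus_mem_formStabilizer_F ha⟩, ?_, rfl⟩
    exact smul_infty_eq_self_iff.mpr (by simp [coe_diagonalTorus])

theorem natCard_stabilizer_infty :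
    Nat.card (MulAction.stabilizer (formStabilizer F) (∞ : OnePoint ℂ)) = 10 := by
  rw [← Subgroup.card_map_of_injective (formStabilizer F).subtype_injective,
    map_subtype_stabilizer_infty, Subgroup.card_map_of_injective diagonalTorus_injective,
    Complex.card_rootsOfUnity]

/-- The dehomogenization `F(z, 1)`, whose roots are the vertices of the icosahedron other
than `∞`. -/
noncomputable def vertexPolynomial : Polynomial ℂ :=
  Polynomial.X ^ 11 - 11 * Polynomial.X ^ 6 - Polynomial.X

theorem natDegree_vertexPolynomial : vertexPolynomial.natDegree = 11 := by
  rw [vertexPolynomial]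
  compute_degree!

theorem eval_vertexPolynomial (z : ℂ) :
    vertexPolynomial.eval z = z ^ 11 - 11 * z ^ 6 - z := by
  simp [vertexPolynomial]

theorem eval_derivative_vertexPolynomial (z : ℂ) :
    vertexPolynomial.derivative.eval z = 11 * z ^ 10 - 66 * z ^ 5 - 1 := by
  simp only [vertexPolynomial, Polynomial.derivative_sub, Polynomial.derivative_mul,
    Polynomial.derivative_X_pow, Polynomial.derivative_ofNat, Polynomial.derivative_X,
    Polynomial.eval_sub, Polynomial.eval_add, Polynomial.eval_mul, Polynomial.eval_pow,
    Polynomial.eval_C, Polynomial.eval_X, Polynomial.eval_ofNat, Polynomial.eval_zero,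
    Polynomial.eval_one]
  push_cast
  ring

theorem eval_div_vertexPolynomial (a : ℂ) {c : ℂ} (hc : c ≠ 0) :
    vertexPolynomial.eval (a / c) = eval ![a, c] F / c ^ 12 := by
  rw [eval_F, eval_vertexPolynomial]
  field_simp

theorem pow_five_sq_of_eval_vertexPolynomial {z : ℂ} (hz : vertexPolynomial.eval z = 0)
    (hz0 : z ≠ 0) : (z ^ 5) ^ 2 = 11 * z ^ 5 + 1 := by
  rw [eval_vertexPolynomial] at hz
  apply mul_left_cancel₀ hz0
  linear_combination hz

theorem separable_vertexPolynomial : vertexPolynomial.Separable := by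
  rw [Polynomial.separable_def, Polynomial.isCoprime_iff_aeval_ne_zero_of_isAlgClosed ℂ ℂ]
  intro z
  by_contra! h
  simp only [Polynomial.coe_aeval_eq_eval, eval_derivative_vertexPolynomial] at h
  obtain ⟨hz, hz'⟩ := h
  have hz0 : z ≠ 0 := by
    rintro rfl
    norm_num at hz'
  have hs := pow_five_sq_of_eval_vertexPolynomial hz hz0
  have h5 : z ^ 5 = -2 / 11 := by linear_combination (hz' - 11 * hs) / 55
  norm_num [h5] at hs

theorem ncard_rootSet_vertexPolynomial : (vertexPolynomial.rootSet ℂ).ncard = 11 := by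
  rw [← Nat.card_coe_set_eq, Nat.card_eq_fintype_card,
    Polynomial.card_rootSet_eq_natDegree separable_vertexPolynomial
      (IsAlgClosed.splits _), natDegree_vertexPolynomial]

theorem mem_rootSet_vertexPolynomial {z : ℂ} :
    z ∈ vertexPolynomial.rootSet ℂ ↔ vertexPolynomial.eval z = 0 := by
  rw [Polynomial.mem_rootSet_of_ne separable_vertexPolynomial.ne_zero,
    Polynomial.coe_aeval_eq_eval]

theorem exists_mem_formStabilizer_smul_infty_eq_of_sq {w : ℂ} (hw : w ^ 2 = w + 1) :
    ∃ A ∈ formStabilizer F, A • (∞ : OnePoint ℂ) = w := by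
  have hw' : w ^ 2 + 1 ≠ 0 := fun h => by
    have : w = -2 := by linear_combination h - hw
    norm_num [this] at h
  obtain ⟨l, hl⟩ := IsAlgClosed.exists_pow_nat_eq (-1 / (w ^ 2 + 1)) two_pos
  have hl' : l ^ 2 * (w ^ 2 + 1) = -1 := by rw [hl, div_mul_cancel₀ _ hw']
  have hl0 : l ≠ 0 := by rintro rfl; norm_num at hl'
  refine ⟨_, vertexHalfTurn_mem_formStabilizer_F hw hl', ?_⟩
  rw [smul_infty_eq_ite]
  simp [vertexHalfTurn, hl0]

theorem exists_mem_formStabilizer_smul_coe_eq_of_pow_five_eq {w z : ℂ} (hw : w ≠ 0)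
    (h : w ^ 5 = z ^ 5) : ∃ A ∈ formStabilizer F, A • (w : OnePoint ℂ) = z := by
  have hζ : (z / w) ^ 5 = 1 := by rw [div_pow, ← h, div_self (pow_ne_zero 5 hw)]
  obtain ⟨ζ, hζz⟩ : IsUnit (z / w) := .of_pow_eq_one hζ (by norm_num)
  have hζ5 : ζ ^ 5 = 1 := Units.ext <| by rw [Units.val_pow_eq_pow_val, hζz, hζ, Units.val_one]
  refine ⟨diagonalTorus (ζ ^ 3), diagonalTorus_mem_formStabilizer_F ?_, ?_⟩
  · calc (ζ ^ 3) ^ 10 = (ζ ^ 5) ^ 6 := by rw [← pow_mul, ← pow_mul]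
      _ = 1 := by rw [hζ5, one_pow]
  · have hζ6 : (ζ ^ 3) ^ 2 = ζ := by
      calc (ζ ^ 3) ^ 2 = ζ ^ 5 * ζ := by rw [← pow_mul, ← pow_succ]
        _ = ζ := by rw [hζ5, one_mul]
    rw [diagonalTorus_smul_coe, ← Units.val_pow_eq_pow_val, hζ6, hζz, div_mul_cancel₀ z hw]

theorem exists_sq_eq_add_one_and_pow_five_eq {K : Type*} [Field K] {s : K} (h5 : (5 : K) ≠ 0)
    (hs : s ^ 2 = 11 * s + 1) : ∃ w : K, w ^ 2 = w + 1 ∧ w ^ 5 = s := by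
  -- A root of `w² = w + 1` satisfies `w⁵ = 5w + 3`, so `w` is determined by `w⁵`.
  obtain ⟨w, hw⟩ : ∃ w, 5 * w + 3 = s := ⟨(s - 3) / 5, by field_simp; ring⟩
  have hw2 : w ^ 2 = w + 1 := by
    apply mul_left_cancel₀ (pow_ne_zero 2 h5)
    rw [← hw] at hs
    linear_combination hs
  exact ⟨w, hw2, by linear_combination (w ^ 3 + w ^ 2 + 2 * w + 3) * hw2 + hw⟩

theorem exists_mem_formStabilizer_smul_infty_eq {z : ℂ} (hz : vertexPolynomial.eval z = 0) :
    ∃ A ∈ formStabilizer F, A • (∞ : OnePoint ℂ) = z := by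
  obtain rfl | hz0 := eq_or_ne z 0
  · exact ⟨V, V_mem_formStabilizer_F, by rw [smul_infty_eq_ite]; simp [V, Vmat]⟩
  obtain ⟨w, hw2, hw5⟩ := exists_sq_eq_add_one_and_pow_five_eq (by norm_num)
    (pow_five_sq_of_eval_vertexPolynomial hz hz0)
  have hw0 : w ≠ 0 := by rintro rfl; norm_num at hw2
  obtain ⟨A, hA, hAw⟩ := exists_mem_formStabilizer_smul_infty_eq_of_sq hw2
  obtain ⟨B, hB, hBz⟩ := exists_mem_formStabilizer_smul_coe_eq_of_pow_five_eq hw0 hw5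
  exact ⟨B * A, mul_mem hB hA, by rw [mul_smul, hAw, hBz]⟩

theorem orbit_infty :
    MulAction.orbit (formStabilizer F) (∞ : OnePoint ℂ) =
      insert ∞ ((↑) '' vertexPolynomial.rootSet ℂ) := by
  apply Set.Subset.antisymm
  · rintro _ ⟨⟨A, hF⟩, rfl⟩
    have hroot : eval ![A 0 0, A 1 0] F = 0 := by
      simpa [eval_F] using mem_formStabilizer_iff_eval.mp hF 1 0
    change A • ∞ ∈ _
    rw [smul_infty_eq_ite]
    split_ifs with hc
    · exact Set.mem_insert _ _
    · refine Set.mem_insert_of_mem _ ⟨_, mem_rootSet_vertexPolynomial.mpr ?_, rfl⟩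
      rw [eval_div_vertexPolynomial _ hc, hroot, zero_div]
  · rintro _ (rfl | ⟨z, hz, rfl⟩)
    · exact MulAction.mem_orbit_self _
    · obtain ⟨A, hA, hAz⟩ :=
        exists_mem_formStabilizer_smul_infty_eq (mem_rootSet_vertexPolynomial.mp hz)
      exact ⟨⟨A, hA⟩, hAz⟩

theorem ncard_orbit_infty :
    (MulAction.orbit (formStabilizer F) (∞ : OnePoint ℂ)).ncard = 12 := by
  rw [orbit_infty, Set.ncard_insert_of_notMem (by simp) ((Polynomial.rootSet_finite _ _).image _),
    Set.ncard_image_of_injective _ OnePoint.coe_injective, ncard_rootSet_vertexPolynomial]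

theorem natCard_formStabilizer_F : Nat.card (formStabilizer F) = 120 := by
  rw [← (MulAction.stabilizer (formStabilizer F) (∞ : OnePoint ℂ)).card_mul_index,
    MulAction.index_stabilizer, natCard_stabilizer_infty, ncard_orbit_infty]

end MoebiusAction

/-- There is an order-120 subgroup of `SL(2,ℂ)` (the binary icosahedral group)
containing `S` and `V` under which all three icosahedral forms `F`, `H`, `T`
are invariant. -/
theorem binary_icosahedral_group_exists :
    ∃ G : Subgroup (Matrix.SpecialLinearGroup (Fin 2) ℂ),
      Nat.card G = 120 ∧
      (∃ S' ∈ G, ((S' : Matrix.SpecialLinearGroup (Fin 2) ℂ) : Matrix (Fin 2) (Fin 2) ℂ)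
          = Smat) ∧
      (∃ V' ∈ G, ((V' : Matrix.SpecialLinearGroup (Fin 2) ℂ) : Matrix (Fin 2) (Fin 2) ℂ)
          = Vmat) ∧
      ∀ A ∈ G, subst ((A : Matrix.SpecialLinearGroup (Fin 2) ℂ) : Matrix (Fin 2) (Fin 2) ℂ) F = F ∧
        subst ((A : Matrix.SpecialLinearGroup (Fin 2) ℂ) : Matrix (Fin 2) (Fin 2) ℂ) H = H ∧
        subst ((A : Matrix.SpecialLinearGroup (Fin 2) ℂ) : Matrix (Fin 2) (Fin 2) ℂ) T = T := by
  exact ⟨formStabilizer F, natCard_formStabilizer_F, exists_mem_formStabilizer_F_coe_eq_Smat,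
    ⟨V, V_mem_formStabilizer_F, rfl⟩,
    fun _ hA => ⟨hA, subst_H_of_subst_F hA, subst_T_of_subst_F hA⟩⟩
end

section
/- There exists a finite subgroup G of SL(2,ℂ) of order 120 under which the form F(x,y) = x·y·(x^10 − 11x^5y^5 − y^10) is invariant (i.e., F(A·(x,y)) = F(x,y) for all A ∈ G), whose center is {I, −I} of order 2, and whose quotient by its center is isomorphic as a group to the alternating group A₅ on five letters (the rotation group of the icosahedron, of order 60). -/
open MvPolynomial

/-!
The 30 edge midpoints of the icosahedron are the vertices of five octahedra, and Klein's group
permutes them. Algebraically, let `t₀, …, t₄` be the sextic forms vanishing on the five octahedra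
and let `G` consist of the matrices of determinant one that permute the `tₖ` evenly.

* `F` is invariant under `G`, because `∑ tₖ ^ 2 = -20 * F`.
* The `tₖ` are the values at the fifth roots of unity `z` of a polynomial in `z`, so its
  coefficients are linear combinations of them. A matrix fixing every `tₖ` therefore fixes the
  coefficient `-5 * x ^ 4 * y ^ 2`, and this forces it to be `±1`.
* A rotation about a vertex axis permutes the `tₖ` by a 5-cycle, a half-turn by a product of two
  transpositions, and the product of the two is a 3-cycle. By Jordan's theorem `G` maps onto `A₅`.

So `G` is an extension of `A₅` by `±1`, and its center is the kernel since `A₅` has trivial center.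
-/

section OctahedralForm

variable {R S : Type*} [CommRing R] [CommRing S]

/-- Klein's octahedral sextic form, whose roots, for `z` a fifth root of unity, are the vertices of
one of the five octahedra inscribed in the icosahedron. The signs and the normalization match the
icosahedral form `F`. -/
def octForm (z x y : R) : R :=
  (-5 * x ^ 4 * y ^ 2) * z + (y ^ 6 - 2 * x ^ 5 * y) * z ^ 2 + (x ^ 6 + 2 * x * y ^ 5) * z ^ 3 +
    (-5 * x ^ 2 * y ^ 4) * z ^ 4

theorem map_octForm {Φ : Type*} [FunLike Φ R S] [RingHomClass Φ R S] (f : Φ) (z x y : R) :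
    f (octForm z x y) = octForm (f z) (f x) (f y) := by
  simp [octForm, map_ofNat f]

theorem octForm_mul_mul (c z x y : R) : octForm z (c * x) (c * y) = c ^ 6 * octForm z x y := by
  simp only [octForm]
  ring

theorem octForm_neg_neg (z x y : R) : octForm z (-x) (-y) = octForm z x y := by
  simp only [octForm]
  ring

theorem octForm_rotation {e : R} (he : e ^ 5 = 1) (z x y : R) :
    octForm (z * e) (e ^ 2 * x) (e ^ 3 * y) = octForm z x y := by
  simp only [octForm]
  have he₁₅ : e ^ 15 = 1 := by rw [pow_mul e 5 3, he, one_pow]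
  have he₂₀ : e ^ 20 = 1 := by rw [pow_mul e 5 4, he, one_pow]
  linear_combination
    (-5 * x ^ 4 * y ^ 2 * z - 2 * x ^ 5 * y * z ^ 2 + x ^ 6 * z ^ 3) * he₁₅ +
    (y ^ 6 * z ^ 2 + 2 * x * y ^ 5 * z ^ 3 - 5 * x ^ 2 * y ^ 4 * z ^ 4) * he₂₀

-- Each factor vanishes on a pair of opposite vertices of the octahedron; the half-turn permutes
-- these pairs, so it acts on the factors up to scalars.
theorem octForm_eq_prod {e z : R} (he : 1 + e + e ^ 2 + e ^ 3 + e ^ 4 = 0) (hz : z ^ 5 = 1)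
    (x y : R) :
    octForm z x y = (z * x ^ 2 + z ^ 4 * y ^ 2) *
      (z * x ^ 2 + 2 * (e ^ 2 + e ^ 3) * (x * y) - z ^ 4 * y ^ 2) *
      (z * x ^ 2 - 2 * (1 + e ^ 2 + e ^ 3) * (x * y) - z ^ 4 * y ^ 2) := by
  simp only [octForm]
  grind

theorem octForm_one_involution {e : R} (he : 1 + e + e ^ 2 + e ^ 3 + e ^ 4 = 0) (x y : R) :
    octForm 1 ((e - e ^ 4) * x + (e ^ 2 - e ^ 3) * y) ((e ^ 2 - e ^ 3) * x - (e - e ^ 4) * y) =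
      5 ^ 3 * octForm 1 x y := by
  set x' := (e - e ^ 4) * x + (e ^ 2 - e ^ 3) * y
  set y' := (e ^ 2 - e ^ 3) * x - (e - e ^ 4) * y
  have h₁ : x' ^ 2 + y' ^ 2 = -5 * (x ^ 2 + y ^ 2) := by grind
  have h₂ : x' ^ 2 + 2 * (e ^ 2 + e ^ 3) * (x' * y') - y' ^ 2 =
      5 * (x ^ 2 + 2 * (e ^ 2 + e ^ 3) * (x * y) - y ^ 2) := by grind
  have h₃ : x' ^ 2 - 2 * (1 + e ^ 2 + e ^ 3) * (x' * y') - y' ^ 2 =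
      -5 * (x ^ 2 - 2 * (1 + e ^ 2 + e ^ 3) * (x * y) - y ^ 2) := by grind
  simp only [octForm_eq_prod he (one_pow 5), one_pow, one_mul, h₁, h₂, h₃]
  ring

theorem octForm_involution {e : R} (he : 1 + e + e ^ 2 + e ^ 3 + e ^ 4 = 0) (x y : R) :
    octForm e ((e - e ^ 4) * x + (e ^ 2 - e ^ 3) * y) ((e ^ 2 - e ^ 3) * x - (e - e ^ 4) * y) =
      5 ^ 3 * octForm (e ^ 2) x y := by
  have he₅ : e ^ 5 = 1 := by linear_combination (e - 1) * he
  have he₁₀ : (e ^ 2) ^ 5 = 1 := by rw [pow_right_comm, he₅, one_pow]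
  set x' := (e - e ^ 4) * x + (e ^ 2 - e ^ 3) * y
  set y' := (e ^ 2 - e ^ 3) * x - (e - e ^ 4) * y
  have h₁ : e * x' ^ 2 + e ^ 4 * y' ^ 2 = -(1 + 2 * (e ^ 2 + e ^ 3)) * (e ^ 2 - e ^ 3) *
      (e ^ 2 * x ^ 2 + 2 * (e ^ 2 + e ^ 3) * (x * y) - (e ^ 2) ^ 4 * y ^ 2) := by grind
  have h₂ : e * x' ^ 2 + 2 * (e ^ 2 + e ^ 3) * (x' * y') - e ^ 4 * y' ^ 2 = 5 * (e ^ 2 + e ^ 3) *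
      (e ^ 2 * x ^ 2 - 2 * (1 + e ^ 2 + e ^ 3) * (x * y) - (e ^ 2) ^ 4 * y ^ 2) := by grind
  have h₃ : e * x' ^ 2 - 2 * (1 + e ^ 2 + e ^ 3) * (x' * y') - e ^ 4 * y' ^ 2 =
      5 * (e ^ 2 - e ^ 3) * (e ^ 2 * x ^ 2 + (e ^ 2) ^ 4 * y ^ 2) := by grind
  have hscale : -(1 + 2 * (e ^ 2 + e ^ 3)) * (e ^ 2 - e ^ 3) * (e ^ 2 + e ^ 3) * (e ^ 2 - e ^ 3) =
    5 := by grind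
  rw [octForm_eq_prod he he₅, octForm_eq_prod he he₁₀, h₁, h₂, h₃]
  linear_combination 25 * (e ^ 2 * x ^ 2 + (e ^ 2) ^ 4 * y ^ 2) *
    (e ^ 2 * x ^ 2 + 2 * (e ^ 2 + e ^ 3) * (x * y) - (e ^ 2) ^ 4 * y ^ 2) *
    (e ^ 2 * x ^ 2 - 2 * (1 + e ^ 2 + e ^ 3) * (x * y) - (e ^ 2) ^ 4 * y ^ 2) * hscale

theorem octForm_one_halfTurn {c e : R} (he : 1 + e + e ^ 2 + e ^ 3 + e ^ 4 = 0)
    (hc : 5 * c ^ 2 = 1) (x y : R) :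
    octForm 1 (c * ((e - e ^ 4) * x + (e ^ 2 - e ^ 3) * y))
      (c * ((e ^ 2 - e ^ 3) * x - (e - e ^ 4) * y)) = octForm 1 x y := by
  have hc₆ : c ^ 6 * 5 ^ 3 = 1 := by linear_combination (25 * c ^ 4 + 5 * c ^ 2 + 1) * hc
  rw [octForm_mul_mul, octForm_one_involution he, ← mul_assoc, hc₆, one_mul]

theorem octForm_halfTurn {c e : R} (he : 1 + e + e ^ 2 + e ^ 3 + e ^ 4 = 0)
    (hc : 5 * c ^ 2 = 1) (x y : R) :
    octForm e (c * ((e - e ^ 4) * x + (e ^ 2 - e ^ 3) * y))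
      (c * ((e ^ 2 - e ^ 3) * x - (e - e ^ 4) * y)) = octForm (e ^ 2) x y := by
  have hc₆ : c ^ 6 * 5 ^ 3 = 1 := by linear_combination (25 * c ^ 4 + 5 * c ^ 2 + 1) * hc
  rw [octForm_mul_mul, octForm_involution he, ← mul_assoc, hc₆, one_mul]

theorem octForm_sq_halfTurn {c e : R} (he : 1 + e + e ^ 2 + e ^ 3 + e ^ 4 = 0)
    (hc : 5 * c ^ 2 = 1) (x y : R) :
    octForm (e ^ 2) (c * ((e - e ^ 4) * x + (e ^ 2 - e ^ 3) * y))
      (c * ((e ^ 2 - e ^ 3) * x - (e - e ^ 4) * y)) = octForm e x y := by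
  rw [← octForm_halfTurn he hc, ← octForm_neg_neg e x y]
  -- The half-turn matrix squares to `-1`.
  congr 1 <;> grind

theorem octForm_pow_halfTurn {c e : R} (he : 1 + e + e ^ 2 + e ^ 3 + e ^ 4 = 0)
    (hc : 5 * c ^ 2 = 1) (x y : R) (k : Fin 5) :
    octForm (e ^ ((Equiv.swap 1 2 * Equiv.swap 3 4 : Equiv.Perm (Fin 5)) k : ℕ))
      (c * ((e - e ^ 4) * x + (e ^ 2 - e ^ 3) * y))
      (c * ((e ^ 2 - e ^ 3) * x - (e - e ^ 4) * y)) = octForm (e ^ (k : ℕ)) x y := by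
  have he' : 1 + e ^ 4 + (e ^ 4) ^ 2 + (e ^ 4) ^ 3 + (e ^ 4) ^ 4 = 0 := by grind
  -- Replacing `e` by `e⁻¹ = e ^ 4` changes the sign of the half-turn.
  have hconj (z : R) : octForm z (c * ((e - e ^ 4) * x + (e ^ 2 - e ^ 3) * y))
      (c * ((e ^ 2 - e ^ 3) * x - (e - e ^ 4) * y)) =
      octForm z (c * ((e ^ 4 - (e ^ 4) ^ 4) * x + ((e ^ 4) ^ 2 - (e ^ 4) ^ 3) * y))
      (c * (((e ^ 4) ^ 2 - (e ^ 4) ^ 3) * x - (e ^ 4 - (e ^ 4) ^ 4) * y)) := by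
    rw [← octForm_neg_neg]
    congr 1 <;> grind
  have he₃ : e ^ 3 = (e ^ 4) ^ 2 := by grind
  fin_cases k
  · change octForm (e ^ 0) _ _ = octForm (e ^ 0) x y
    rw [pow_zero, octForm_one_halfTurn he hc]
  · change octForm (e ^ 2) _ _ = octForm (e ^ 1) x y
    rw [pow_one, octForm_sq_halfTurn he hc]
  · change octForm (e ^ 1) _ _ = octForm (e ^ 2) x y
    rw [pow_one, octForm_halfTurn he hc]
  · change octForm (e ^ 4) _ _ = octForm (e ^ 3) x y
    rw [hconj, he₃, octForm_halfTurn he' hc]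
  · change octForm (e ^ 3) _ _ = octForm (e ^ 4) x y
    rw [hconj, he₃, octForm_sq_halfTurn he' hc]

theorem sum_pow_pow_eq_zero [IsDomain R] {n m : ℕ} {ζ : R} (hζ : IsPrimitiveRoot ζ n)
    (hm : ¬n ∣ m) : ∑ k : Fin n, (ζ ^ (k : ℕ)) ^ m = 0 := by
  have hne : ζ ^ m - 1 ≠ 0 := sub_ne_zero.2 (mt (hζ.dvd_of_pow_eq_one m) hm)
  refine (mul_eq_zero_iff_right hne).1 ?_
  simp only [pow_right_comm _ _ m]
  rw [Fin.sum_univ_eq_sum_range, geom_sum_mul, pow_right_comm, hζ.pow_eq_one, one_pow, sub_self]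

theorem sum_primitiveRoot_eq_mul_coeff_zero [IsDomain R] {n : ℕ} [NeZero n] {ζ : R}
    (hζ : IsPrimitiveRoot ζ n) {f : R → R} (c : Fin n → R)
    (hf : ∀ z, z ^ n = 1 → f z = ∑ j, c j * z ^ (j : ℕ)) :
    ∑ k : Fin n, f (ζ ^ (k : ℕ)) = n * c 0 := by
  have hroot (k : Fin n) : (ζ ^ (k : ℕ)) ^ n = 1 := by rw [pow_right_comm, hζ.pow_eq_one, one_pow]
  simp only [hf _ (hroot _)]
  rw [Finset.sum_comm]
  simp only [← Finset.mul_sum]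
  rw [Fintype.sum_eq_single 0]
  · simp [mul_comm]
  · intro j hj
    have hdvd : ¬n ∣ j := Nat.not_dvd_of_pos_of_lt (Fin.pos_iff_ne_zero.2 hj) j.isLt
    rw [sum_pow_pow_eq_zero hζ hdvd, mul_zero]

theorem sum_pow_mul_octForm [IsDomain R] {ζ : R} (hζ : IsPrimitiveRoot ζ 5) (x y : R) :
    ∑ k : Fin 5, (ζ ^ (k : ℕ)) ^ 4 * octForm (ζ ^ (k : ℕ)) x y = -25 * (x ^ 4 * y ^ 2) := by
  rw [sum_primitiveRoot_eq_mul_coeff_zero hζ (f := fun z => z ^ 4 * octForm z x y)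
    ![-5 * x ^ 4 * y ^ 2, y ^ 6 - 2 * x ^ 5 * y, x ^ 6 + 2 * x * y ^ 5, -5 * x ^ 2 * y ^ 4, 0]]
  · simp only [Matrix.cons_val_zero, Nat.cast_ofNat]
    ring
  · intro z hz
    simp only [octForm, Fin.sum_univ_five, Matrix.cons_val, Matrix.cons_val_zero,
      Matrix.cons_val_one, Fin.coe_ofNat_eq_mod, Nat.reduceMod, Nat.zero_mod]
    grind

theorem sum_sq_primitiveRoot_five [IsDomain R] {ζ : R} (hζ : IsPrimitiveRoot ζ 5) (a b c d : R) :
    ∑ k : Fin 5, (a * ζ ^ (k : ℕ) + b * (ζ ^ (k : ℕ)) ^ 2 + c * (ζ ^ (k : ℕ)) ^ 3 +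
      d * (ζ ^ (k : ℕ)) ^ 4) ^ 2 = 10 * (a * d + b * c) := by
  rw [sum_primitiveRoot_eq_mul_coeff_zero hζ
    (f := fun z => (a * z + b * z ^ 2 + c * z ^ 3 + d * z ^ 4) ^ 2)
    ![2 * (a * d + b * c), c ^ 2 + 2 * b * d, a ^ 2 + 2 * c * d, d ^ 2 + 2 * a * b,
      b ^ 2 + 2 * a * c]]
  · simp only [Matrix.cons_val_zero, Nat.cast_ofNat]
    ring
  · intro z hz
    simp only [Fin.sum_univ_five, Matrix.cons_val, Matrix.cons_val_zero, Matrix.cons_val_one,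
      Fin.coe_ofNat_eq_mod, Nat.reduceMod, Nat.zero_mod]
    linear_combination (2 * (a * d + b * c) + z * (c ^ 2 + 2 * b * d) + z ^ 2 * (2 * c * d) +
      z ^ 3 * d ^ 2) * hz

theorem sum_octForm_sq [IsDomain R] {ζ : R} (hζ : IsPrimitiveRoot ζ 5) (x y : R) :
    ∑ k : Fin 5, octForm (ζ ^ (k : ℕ)) x y ^ 2 =
      -20 * (x * y * (x ^ 10 - 11 * x ^ 5 * y ^ 5 - y ^ 10)) := by
  simp only [octForm, sum_sq_primitiveRoot_five hζ]
  ring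

end OctahedralForm

section Groups

theorem center_eq_ker_of_center_range_eq_bot {G P : Type*} [Group G] [Group P] {f : G →* P}
    (hker : f.ker ≤ Subgroup.center G) (hrange : Subgroup.center f.range = ⊥) :
    Subgroup.center G = f.ker := by
  refine le_antisymm (fun z hz => ?_) hker
  have hfz : f.rangeRestrict z ∈ Subgroup.center f.range := by
    refine Subgroup.mem_center_iff.2 fun w => ?_
    obtain ⟨g, rfl⟩ := f.rangeRestrict_surjective w
    rw [← map_mul, ← map_mul, Subgroup.mem_center_iff.1 hz g]
  rw [hrange, Subgroup.mem_bot] at hfz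
  rwa [← f.ker_rangeRestrict, MonoidHom.mem_ker]

theorem alternatingGroup_le_of_prime_card {α : Type*} [Fintype α] [DecidableEq α]
    {G : Subgroup (Equiv.Perm α)} (hp : (Fintype.card α).Prime) {ρ τ : Equiv.Perm α}
    (hρ : ρ.IsCycle) (hsupp : ρ.support = Finset.univ) (hρG : ρ ∈ G) (hτ : τ.IsThreeCycle)
    (hτG : τ ∈ G) : alternatingGroup α ≤ G := by
  have hmoved (x : α) : ρ x ≠ x := Equiv.Perm.mem_support.1 (hsupp ▸ Finset.mem_univ x)
  have htrans : MulAction.IsPretransitive G α := ⟨fun x y => by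
    obtain ⟨i, hi⟩ := hρ.exists_zpow_eq (hmoved x) (hmoved y)
    exact ⟨⟨ρ ^ i, zpow_mem hρG i⟩, hi⟩⟩
  have hprim : MulAction.IsPreprimitive G α := .of_prime_card (by rwa [Nat.card_eq_fintype_card])
  exact Equiv.Perm.alternatingGroup_le_of_isPreprimitive_of_isThreeCycle_mem hprim hτ hτG

end Groups

section PermutedPolynomials

variable {n ι R : Type*} [Fintype n] [CommRing R]

theorem bind₁_toMvPolynomial_mul (A B : Matrix n n R) (p : MvPolynomial n R) :
    bind₁ (A * B).toMvPolynomial p = bind₁ B.toMvPolynomial (bind₁ A.toMvPolynomial p) := by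
  rw [bind₁_bind₁]
  congr 2
  exact _root_.funext fun i => A.toMvPolynomial_mul B i

variable [DecidableEq n]

/-- The substitution `A` permutes the family `t` according to `σ`. Since substitution is an
anti-action, `σ` stands on the side of the substituted polynomial, which makes `A ↦ σ`
multiplicative. -/
def Permutes (t : ι → MvPolynomial n R) (A : Matrix.SpecialLinearGroup n R) (σ : Equiv.Perm ι) :
    Prop :=
  ∀ k, bind₁ (A : Matrix n n R).toMvPolynomial (t (σ k)) = t k

namespace Permutes

variable {t : ι → MvPolynomial n R} {A B : Matrix.SpecialLinearGroup n R} {σ τ : Equiv.Perm ι}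

theorem one (t : ι → MvPolynomial n R) : Permutes t 1 1 := fun k => by simp

theorem mul (hA : Permutes t A σ) (hB : Permutes t B τ) : Permutes t (A * B) (σ * τ) := fun k => by
  rw [Matrix.SpecialLinearGroup.coe_mul, bind₁_toMvPolynomial_mul, Equiv.Perm.mul_apply, hA, hB]

theorem inv (hA : Permutes t A σ) : Permutes t A⁻¹ σ⁻¹ := fun k => by
  rw [← hA (σ⁻¹ k), ← Equiv.Perm.mul_apply, mul_inv_cancel, Equiv.Perm.one_apply,
    ← bind₁_toMvPolynomial_mul, ← Matrix.SpecialLinearGroup.coe_mul, mul_inv_cancel]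
  exact one t k

theorem unique (ht : Function.Injective t) (hσ : Permutes t A σ) (hτ : Permutes t A τ) :
    σ = τ := by
  have h : Permutes t 1 (σ * τ⁻¹) := mul_inv_cancel A ▸ hσ.mul hτ.inv
  refine mul_inv_eq_one.1 (Equiv.ext fun k => ht ?_)
  simpa using h k

theorem bind₁_sum_pow [Fintype ι] (hA : Permutes t A σ) (m : ℕ) :
    bind₁ (A : Matrix n n R).toMvPolynomial (∑ k, t k ^ m) = ∑ k, t k ^ m := by
  conv_lhs => rw [← Equiv.sum_comp σ]
  simp only [map_sum, map_pow, hA _]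

end Permutes

/-- The group of matrices of determinant one that permute the family `t` by an element of `H`. -/
noncomputable def permutingSubgroup (t : ι → MvPolynomial n R) (H : Subgroup (Equiv.Perm ι)) :
    Subgroup (Matrix.SpecialLinearGroup n R) where
  carrier := {A | ∃ σ ∈ H, Permutes t A σ}
  one_mem' := ⟨1, one_mem H, .one t⟩
  mul_mem' := fun ⟨σ, hσ, hA⟩ ⟨τ, hτ, hB⟩ => ⟨σ * τ, mul_mem hσ hτ, hA.mul hB⟩
  inv_mem' := fun ⟨σ, hσ, hA⟩ => ⟨σ⁻¹, inv_mem hσ, hA.inv⟩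

namespace permutingSubgroup

variable {t : ι → MvPolynomial n R} (ht : Function.Injective t) {H : Subgroup (Equiv.Perm ι)}

/-- The permutation representation of `permutingSubgroup t H` on the indices of an injective family
`t`; injectivity makes the chosen permutation unique. -/
noncomputable def toPerm : permutingSubgroup t H →* Equiv.Perm ι :=
  MonoidHom.mk' (fun A => A.2.choose) fun A B =>
    (A * B).2.choose_spec.2.unique ht (A.2.choose_spec.2.mul B.2.choose_spec.2)

theorem permutes_toPerm (A : permutingSubgroup t H) : Permutes t A (toPerm ht A) :=
  A.2.choose_spec.2

theorem toPerm_eq_iff {A : permutingSubgroup t H} {σ : Equiv.Perm ι} :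
    toPerm ht A = σ ↔ Permutes t A σ :=
  ⟨fun h => h ▸ permutes_toPerm ht A, (permutes_toPerm ht A).unique ht⟩

theorem range_toPerm_le : (toPerm ht (H := H)).range ≤ H := by
  rintro _ ⟨A, rfl⟩
  exact A.2.choose_spec.1

theorem mem_range_toPerm {A : Matrix.SpecialLinearGroup n R} {σ : Equiv.Perm ι} (hσ : σ ∈ H)
    (hA : Permutes t A σ) : σ ∈ (toPerm ht (H := H)).range :=
  ⟨⟨A, σ, hσ, hA⟩, (toPerm_eq_iff ht).2 hA⟩

end permutingSubgroup

end PermutedPolynomials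

section BinaryIcosahedral

variable {R : Type*} [CommRing R] {ζ : R}

/-- Klein's icosahedral form over an arbitrary commutative ring; over `ℂ` it is `F`. -/
noncomputable def kleinForm (R : Type*) [CommRing R] : MvPolynomial (Fin 2) R :=
  X 0 * X 1 * (X 0 ^ 10 - 11 * X 0 ^ 5 * X 1 ^ 5 - X 1 ^ 10)

/-- The `k`-th of the five octahedral forms, as a polynomial; `ζ` stands for a primitive fifth root
of unity. -/
noncomputable def octPoly (ζ : R) (k : Fin 5) : MvPolynomial (Fin 2) R :=
  octForm (C ζ ^ (k : ℕ)) (X 0) (X 1)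

theorem toMvPolynomial_fin_two (A : Matrix (Fin 2) (Fin 2) R) (i : Fin 2) :
    A.toMvPolynomial i = C (A i 0) * X 0 + C (A i 1) * X 1 := by
  simp [Matrix.toMvPolynomial, C_mul_X_eq_monomial]

theorem bind₁_octPoly (A : Matrix (Fin 2) (Fin 2) R) (k : Fin 5) :
    bind₁ A.toMvPolynomial (octPoly ζ k) =
      octForm (C ζ ^ (k : ℕ)) (C (A 0 0) * X 0 + C (A 0 1) * X 1)
        (C (A 1 0) * X 0 + C (A 1 1) * X 1) := by
  simp [octPoly, map_octForm, toMvPolynomial_fin_two]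

theorem Permutes.octPoly_neg {A : Matrix.SpecialLinearGroup (Fin 2) R}
    {σ : Equiv.Perm (Fin 5)} (hA : Permutes (octPoly ζ) A σ) : Permutes (octPoly ζ) (-A) σ := by
  intro k
  rw [← hA k, bind₁_octPoly, bind₁_octPoly, ← octForm_neg_neg]
  simp [add_comm]

theorem octPoly_injective (hζ : IsPrimitiveRoot ζ 5) : Function.Injective (octPoly ζ) := by
  intro j k h
  have hcube : (ζ ^ (j : ℕ)) ^ 3 = (ζ ^ (k : ℕ)) ^ 3 := by
    simpa [octPoly, octForm] using congrArg (eval ![1, 0]) h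
  rw [pow_right_comm ζ j, pow_right_comm ζ k] at hcube
  exact Fin.ext ((hζ.pow_of_coprime 3 (by norm_num)).pow_inj j.2 k.2 hcube)

theorem isPrimitiveRoot_C {σ : Type*} {n : ℕ} (hζ : IsPrimitiveRoot ζ n) :
    IsPrimitiveRoot (C ζ : MvPolynomial σ R) n :=
  hζ.map_of_injective (C_injective _ _)

theorem exists_permutes_finRotate (hζ : ζ ^ 5 = 1) :
    ∃ A : Matrix.SpecialLinearGroup (Fin 2) R, Permutes (octPoly ζ) A (finRotate 5) := by
  have hdet : (!![ζ ^ 2, 0; 0, ζ ^ 3]).det = 1 := by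
    rw [Matrix.det_fin_two_of, ← pow_add, hζ, mul_zero, sub_zero]
  refine ⟨⟨_, hdet⟩, fun k => ?_⟩
  have hC : (C ζ : MvPolynomial (Fin 2) R) ^ 5 = 1 := by rw [← C_pow, hζ, C_1]
  have hk : (C ζ : MvPolynomial (Fin 2) R) ^ (finRotate 5 k : ℕ) = C ζ ^ (k : ℕ) * C ζ := by
    rw [finRotate_apply, Fin.val_add, ← pow_eq_pow_mod _ hC, Fin.val_one, pow_succ]
  rw [bind₁_octPoly, hk]
  simpa [octPoly] using octForm_rotation hC (C ζ ^ (k : ℕ)) (X 0) (X 1)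

theorem exists_permutes_doubleSwap {c : R} (hζ : 1 + ζ + ζ ^ 2 + ζ ^ 3 + ζ ^ 4 = 0)
    (hc : 5 * c ^ 2 = 1) :
    ∃ A : Matrix.SpecialLinearGroup (Fin 2) R,
      Permutes (octPoly ζ) A (Equiv.swap 1 2 * Equiv.swap 3 4) := by
  have hdet : (!![c * (ζ - ζ ^ 4), c * (ζ ^ 2 - ζ ^ 3);
      c * (ζ ^ 2 - ζ ^ 3), -(c * (ζ - ζ ^ 4))]).det = 1 := by
    rw [Matrix.det_fin_two_of]
    grind
  refine ⟨⟨_, hdet⟩, fun k => ?_⟩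
  have hCζ : 1 + C ζ + C ζ ^ 2 + C ζ ^ 3 + C ζ ^ 4 = (0 : MvPolynomial (Fin 2) R) := by
    simpa using congrArg C hζ
  have hCc : 5 * C c ^ 2 = (1 : MvPolynomial (Fin 2) R) := by
    simpa [map_ofNat C] using congrArg C hc
  rw [bind₁_octPoly, octPoly, ← octForm_pow_halfTurn hCζ hCc (X 0) (X 1) k]
  congr 1 <;> simp only [Matrix.of_apply, Matrix.cons_val_zero, Matrix.cons_val_one,
    Matrix.cons_val_fin_one, C_mul, C_neg, C_sub, C_pow] <;> ring

section Domain

variable [IsDomain R]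

theorem sum_octPoly_sq (hζ : IsPrimitiveRoot ζ 5) :
    ∑ k, octPoly ζ k ^ 2 = C (-20) * kleinForm R := by
  simpa [kleinForm, octPoly, map_ofNat C] using sum_octForm_sq (isPrimitiveRoot_C hζ) (X 0) (X 1)

theorem five_ne_zero_of_isPrimitiveRoot (hζ : IsPrimitiveRoot ζ 5) : (5 : R) ≠ 0 := by
  simpa using hζ.neZero'.out

theorem Permutes.bind₁_kleinForm [NeZero (2 : R)] (hζ : IsPrimitiveRoot ζ 5)
    {A : Matrix.SpecialLinearGroup (Fin 2) R} {σ : Equiv.Perm (Fin 5)}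
    (hA : Permutes (octPoly ζ) A σ) :
    bind₁ (A : Matrix (Fin 2) (Fin 2) R).toMvPolynomial (kleinForm R) = kleinForm R := by
  have h20 : (-20 : R) ≠ 0 := by
    rw [show (-20 : R) = -(2 ^ 2 * 5) by norm_num]
    exact neg_ne_zero.2 <|
      mul_ne_zero (pow_ne_zero 2 two_ne_zero) (five_ne_zero_of_isPrimitiveRoot hζ)
  have hsum := hA.bind₁_sum_pow 2
  rw [sum_octPoly_sq hζ, map_mul, algHom_C, algebraMap_eq] at hsum
  exact mul_left_cancel₀ (C_ne_zero.2 h20) hsum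

theorem pow_four_mul_sq_of_permutes_one (hζ : IsPrimitiveRoot ζ 5)
    {A : Matrix.SpecialLinearGroup (Fin 2) R} (hA : Permutes (octPoly ζ) A 1) (x y : R) :
    (A 0 0 * x + A 0 1 * y) ^ 4 * (A 1 0 * x + A 1 1 * y) ^ 2 = x ^ 4 * y ^ 2 := by
  have hfix (k : Fin 5) : octForm (ζ ^ (k : ℕ)) (A 0 0 * x + A 0 1 * y) (A 1 0 * x + A 1 1 * y) =
      octForm (ζ ^ (k : ℕ)) x y := by
    have h := congrArg (eval ![x, y]) (hA k)
    rw [Equiv.Perm.one_apply, bind₁_octPoly, octPoly, map_octForm, map_octForm] at h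
    simpa using h
  have h25 : (-25 : R) ≠ 0 := by
    rw [show (-25 : R) = -(5 ^ 2) by norm_num]
    exact neg_ne_zero.2 (pow_ne_zero 2 (five_ne_zero_of_isPrimitiveRoot hζ))
  refine mul_left_cancel₀ h25 ?_
  rw [← sum_pow_mul_octForm hζ, ← sum_pow_mul_octForm hζ]
  simp only [hfix]

theorem eq_one_or_eq_neg_one_of_pow_four_mul_sq {A : Matrix.SpecialLinearGroup (Fin 2) R} {z : R}
    (hz₀ : z ≠ 0) (hz : z ^ 2 ≠ 1)
    (hA : ∀ x y, (A 0 0 * x + A 0 1 * y) ^ 4 * (A 1 0 * x + A 1 1 * y) ^ 2 = x ^ 4 * y ^ 2) :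
    A = 1 ∨ A = -1 := by
  have hdet : A 0 0 * A 1 1 - A 0 1 * A 1 0 = 1 := Matrix.det_fin_two A.1 ▸ A.2
  have hac : A 0 0 = 0 ∨ A 1 0 = 0 := by simpa using hA 1 0
  have hbd : A 0 1 = 0 ∨ A 1 1 = 0 := by simpa using hA 0 1
  have ha : A 0 0 ≠ 0 := by
    intro ha
    have hb : A 0 1 ≠ 0 := by
      intro hb
      simp [ha, hb] at hdet
    have hd : A 1 1 = 0 := hbd.resolve_left hb
    have hone : A 0 1 ^ 4 * A 1 0 ^ 2 = 1 := by simpa [ha, hd] using hA 1 1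
    have hz' : A 0 1 ^ 4 * (A 1 0 * z) ^ 2 = z ^ 4 := by simpa [ha, hd] using hA z 1
    refine hz (mul_left_cancel₀ (pow_ne_zero 2 hz₀) ?_)
    linear_combination z ^ 2 * hone - hz'
  have hc : A 1 0 = 0 := hac.resolve_left ha
  have had : A 0 0 * A 1 1 = 1 := by simpa [hc] using hdet
  have hb : A 0 1 = 0 := hbd.resolve_right (right_ne_zero_of_mul_eq_one had)
  have hone : A 0 0 ^ 4 * A 1 1 ^ 2 = 1 := by simpa [hb, hc] using hA 1 1
  have hsq : A 0 0 ^ 2 = 1 := by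
    linear_combination hone - A 0 0 ^ 2 * (A 0 0 * A 1 1 + 1) * had
  have hd : A 1 1 = A 0 0 := by linear_combination A 0 0 * had - A 1 1 * hsq
  refine (sq_eq_one_iff.1 hsq).imp (fun ha => ?_) fun ha => ?_
  all_goals ext i j; fin_cases i <;> fin_cases j <;> simp [ha, hb, hc, hd]

theorem eq_one_or_eq_neg_one_of_permutes_one (hζ : IsPrimitiveRoot ζ 5)
    {A : Matrix.SpecialLinearGroup (Fin 2) R} (hA : Permutes (octPoly ζ) A 1) : A = 1 ∨ A = -1 :=
  eq_one_or_eq_neg_one_of_pow_four_mul_sq (hζ.ne_zero (by norm_num))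
    (hζ.pow_ne_one_of_pos_of_lt two_ne_zero (by norm_num)) (pow_four_mul_sq_of_permutes_one hζ hA)

end Domain

end BinaryIcosahedral

section Field

variable {K : Type*} [Field K] {ζ : K}

/-- The binary icosahedral group, realized as the group of matrices of determinant one that permute
the five octahedral forms evenly; `ζ` stands for a primitive fifth root of unity. -/
noncomputable abbrev binaryIcosahedral (ζ : K) : Subgroup (Matrix.SpecialLinearGroup (Fin 2) K) :=
  permutingSubgroup (octPoly ζ) (alternatingGroup (Fin 5))

namespace binaryIcosahedral

/-- The action of the binary icosahedral group on the five octahedral forms. -/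
noncomputable def toPerm (hζ : IsPrimitiveRoot ζ 5) : binaryIcosahedral ζ →* Equiv.Perm (Fin 5) :=
  permutingSubgroup.toPerm (octPoly_injective hζ)

theorem range_toPerm (hζ : IsPrimitiveRoot ζ 5) : (toPerm hζ).range = alternatingGroup (Fin 5) := by
  have h5 := five_ne_zero_of_isPrimitiveRoot hζ
  have hsum : 1 + ζ + ζ ^ 2 + ζ ^ 3 + ζ ^ 4 = 0 := by
    simpa [Finset.sum_range_succ] using hζ.geom_sum_eq_zero (by norm_num)
  -- Up to sign, `1 + 2 * (ζ ^ 2 + ζ ^ 3)` is the quadratic Gauss sum, whose square is `5`.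
  have hgauss : 5 * ((1 + 2 * (ζ ^ 2 + ζ ^ 3)) / 5) ^ 2 = 1 := by
    field_simp
    grind
  obtain ⟨A, hA⟩ := exists_permutes_finRotate hζ.pow_eq_one
  obtain ⟨B, hB⟩ := exists_permutes_doubleSwap hsum hgauss
  have hρ : finRotate 5 ∈ (toPerm hζ).range :=
    permutingSubgroup.mem_range_toPerm _ (Equiv.Perm.mem_alternatingGroup.2 (by decide)) hA
  have hσ : Equiv.swap 1 2 * Equiv.swap 3 4 ∈ (toPerm hζ).range :=
    permutingSubgroup.mem_range_toPerm _ (Equiv.Perm.mem_alternatingGroup.2 (by decide)) hB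
  have hτ : (finRotate 5 * (Equiv.swap 1 2 * Equiv.swap 3 4)).IsThreeCycle :=
    card_support_eq_three_iff.1 (by decide)
  exact le_antisymm (permutingSubgroup.range_toPerm_le _) <| alternatingGroup_le_of_prime_card
    (by norm_num) isCycle_finRotate support_finRotate hρ hτ (mul_mem hρ hσ)

theorem mem_ker_toPerm (hζ : IsPrimitiveRoot ζ 5) {A : binaryIcosahedral ζ} :
    A ∈ (toPerm hζ).ker ↔ (A : Matrix.SpecialLinearGroup (Fin 2) K) = 1 ∨
      (A : Matrix.SpecialLinearGroup (Fin 2) K) = -1 := by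
  rw [MonoidHom.mem_ker, toPerm, permutingSubgroup.toPerm_eq_iff]
  refine ⟨eq_one_or_eq_neg_one_of_permutes_one hζ, ?_⟩
  rintro (hA | hA)
  · exact hA ▸ Permutes.one _
  · exact hA ▸ (Permutes.one _).octPoly_neg

theorem center_eq_ker (hζ : IsPrimitiveRoot ζ 5) :
    Subgroup.center (binaryIcosahedral ζ) = (toPerm hζ).ker := by
  refine center_eq_ker_of_center_range_eq_bot (fun A hA => ?_) ?_
  · refine Subgroup.mem_center_iff.2 fun B => Subtype.ext ?_
    rcases (mem_ker_toPerm hζ).1 hA with h | h <;> simp [h]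
  · rw [range_toPerm hζ]
    exact alternatingGroup.center_eq_bot (by simp)

theorem card_ker_toPerm [NeZero (2 : K)] (hζ : IsPrimitiveRoot ζ 5) :
    Nat.card (toPerm hζ).ker = 2 := by
  have hneg : (-1 : Matrix.SpecialLinearGroup (Fin 2) K) ∈ binaryIcosahedral ζ :=
    ⟨1, one_mem _, (Permutes.one _).octPoly_neg⟩
  have hne : (-1 : Matrix.SpecialLinearGroup (Fin 2) K) ≠ 1 := by
    intro h
    have h00 : (-1 : K) = 1 := by simpa using congrArg (fun A => A.1 0 0) h
    exact two_ne_zero (α := K) (by linear_combination -h00)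
  refine (Nat.card_eq_two_iff' 1).2
    ⟨⟨⟨-1, hneg⟩, (mem_ker_toPerm hζ).2 (.inr rfl)⟩, ?_, fun ⟨A, hA⟩ hA₁ => ?_⟩
  · simpa [Subtype.ext_iff] using hne
  · have hA₁ : (A : Matrix.SpecialLinearGroup (Fin 2) K) ≠ 1 :=
      fun h => hA₁ (Subtype.ext (Subtype.ext h))
    exact Subtype.ext (Subtype.ext (((mem_ker_toPerm hζ).1 hA).resolve_left hA₁))

theorem card_eq [NeZero (2 : K)] (hζ : IsPrimitiveRoot ζ 5) :
    Nat.card (binaryIcosahedral ζ) = 120 := by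
  rw [← (toPerm hζ).ker.card_mul_index, Subgroup.index_ker, card_ker_toPerm, range_toPerm,
    nat_card_alternatingGroup, Nat.card_fin]
  decide

/-- The isomorphism with `A₅` induced by the action on the five octahedral forms. -/
noncomputable def quotientCenterEquiv (hζ : IsPrimitiveRoot ζ 5) :
    binaryIcosahedral ζ ⧸ Subgroup.center (binaryIcosahedral ζ) ≃* alternatingGroup (Fin 5) :=
  (QuotientGroup.quotientMulEquivOfEq (center_eq_ker hζ)).trans <|
    (QuotientGroup.quotientKerEquivRange _).trans <| MulEquiv.subgroupCongr (range_toPerm hζ)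

end binaryIcosahedral

end Field

theorem binary_icosahedral_mod_center_is_A5_general {K : Type*} [Field K] [NeZero (2 : K)] {ζ : K}
    (hζ : IsPrimitiveRoot ζ 5) :
    ∃ G : Subgroup (Matrix.SpecialLinearGroup (Fin 2) K),
      Nat.card G = 120 ∧
      (∀ A ∈ G, bind₁ (A : Matrix (Fin 2) (Fin 2) K).toMvPolynomial (kleinForm K) =
        kleinForm K) ∧
      Nat.card (Subgroup.center G) = 2 ∧
      (∀ z : G, z ∈ Subgroup.center G ↔
        ((z : Matrix.SpecialLinearGroup (Fin 2) K) : Matrix (Fin 2) (Fin 2) K) = 1 ∨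
          ((z : Matrix.SpecialLinearGroup (Fin 2) K) : Matrix (Fin 2) (Fin 2) K) = -1) ∧
      Nonempty ((G ⧸ Subgroup.center G) ≃* alternatingGroup (Fin 5)) := by
  refine ⟨binaryIcosahedral ζ, binaryIcosahedral.card_eq hζ, ?_, ?_, fun z => ?_,
    ⟨binaryIcosahedral.quotientCenterEquiv hζ⟩⟩
  · rintro A ⟨σ, -, hA⟩
    exact hA.bind₁_kleinForm hζ
  · rw [binaryIcosahedral.center_eq_ker hζ, binaryIcosahedral.card_ker_toPerm]
  · rw [binaryIcosahedral.center_eq_ker hζ, binaryIcosahedral.mem_ker_toPerm]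
    exact or_congr Subtype.ext_iff Subtype.ext_iff

theorem subst_eq_bind₁ (A : Matrix (Fin 2) (Fin 2) ℂ) (G : MvPolynomial (Fin 2) ℂ) :
    subst A G = bind₁ A.toMvPolynomial G := by
  rw [_root_.funext (toMvPolynomial_fin_two A)]
  rfl

/-- There is an order-120 subgroup `G` of `SL(2,ℂ)` leaving `F` invariant whose center
is `{I, −I}` of order 2, and whose quotient by its center is isomorphic to the
alternating group `A₅` (the icosahedral rotation group of order 60). -/
theorem binary_icosahedral_mod_center_is_A5 :
    ∃ G : Subgroup (Matrix.SpecialLinearGroup (Fin 2) ℂ),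
      Nat.card G = 120 ∧
      (∀ A ∈ G, subst ((A : Matrix.SpecialLinearGroup (Fin 2) ℂ) : Matrix (Fin 2) (Fin 2) ℂ)
          F = F) ∧
      Nat.card (Subgroup.center G) = 2 ∧
      (∀ z : G, z ∈ Subgroup.center G ↔
        (((z : Matrix.SpecialLinearGroup (Fin 2) ℂ) : Matrix (Fin 2) (Fin 2) ℂ) = 1 ∨
          ((z : Matrix.SpecialLinearGroup (Fin 2) ℂ) : Matrix (Fin 2) (Fin 2) ℂ) = -1)) ∧
      Nonempty ((G ⧸ Subgroup.center G) ≃* alternatingGroup (Fin 5)) := by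
  simp only [subst_eq_bind₁]
  exact binary_icosahedral_mod_center_is_A5_general (Complex.isPrimitiveRoot_exp 5 (by norm_num))
end

section
/- Let G be any subgroup of SL(2,ℂ) of order 120 under which F(x,y) = x·y·(x^10 − 11x^5y^5 − y^10) is invariant (F(A·(x,y)) = F(x,y) for all A ∈ G). Then: (i) every homogeneous polynomial P ∈ ℂ[x,y] of degree 12 invariant under every element of G is a scalar multiple of F; and (ii) every homogeneous polynomial P ∈ ℂ[x,y] of degree 20 invariant under every element of G is a scalar multiple of H(x,y) = x^20 + 228x^15y^5 + 494x^10y^10 − 228x^5y^15 + y^20. -/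
open MvPolynomial

/-- The matrix of an element of \`SL(2,ℂ)\`. -/
noncomputable def mat (A : Matrix.SpecialLinearGroup (Fin 2) ℂ) : Matrix (Fin 2) (Fin 2) ℂ := A

/-!
`H` is `-1/121` times the Hessian determinant of `F`, hence invariant like `F`.

Let `S ≤ G` be the stabilizer of the line through the zero `(1, 0)` of `F`. The Hessian matrix of
`F` at `(1, 0)` is antidiagonal, and its covariance forces the elements of `S` to be
`diag(ζ, ζ⁻¹)` with `ζ ^ 10 = 1`, so `|S| ≤ 10`. The product of the linear forms vanishing on the
lines of the orbit of `(1, 0)` divides `F`, so `[G : S] ≤ 12`. As `|G| = 120`, both are equalities: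
`F` is this product up to a scalar, and `S` contains `diag(ζ, ζ⁻¹)` with `ζ` of order exactly `10`.

Consequently an invariant form vanishing at `(1, 0)` is divisible by `F`, and an invariant form of
degree not divisible by `10` does vanish there. In degree `12` this is the claim. In degree `20`,
`P - P(1, 0) H` vanishes at `(1, 0)`, so it is `F Q` with `Q` invariant of degree `8`; then `F`
divides `Q` too, so `Q = 0`.
-/

section LinearSubstitution

variable {n R : Type*} [Fintype n] [CommRing R]

/-- The substitution `P ↦ P(A·x)`, as an algebra endomorphism of the polynomial ring. -/
noncomputable def linearSubst (A : Matrix n n R) : MvPolynomial n R →ₐ[R] MvPolynomial n R :=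
  bind₁ A.toMvPolynomial

theorem eval_linearSubst (A : Matrix n n R) (P : MvPolynomial n R) (v : n → R) :
    eval v (linearSubst A P) = eval (A.mulVec v) P := by
  simp only [linearSubst, eval, eval₂Hom_bind₁]
  exact congrArg (eval₂Hom (RingHom.id R) · P)
    (funext fun i => Matrix.toMvPolynomial_eval_eq_apply A i v)

theorem pderiv_toMvPolynomial (A : Matrix n n R) (i j : n) :
    pderiv i (A.toMvPolynomial j) = C (A j i) := by
  classical
  simp [Matrix.toMvPolynomial, ← C_mul_X_eq_monomial, pderiv_X, Pi.single_apply]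

theorem pderiv_linearSubst (A : Matrix n n R) (P : MvPolynomial n R) (i : n) :
    pderiv i (linearSubst A P) = ∑ j, linearSubst A (pderiv j P) * C (A j i) := by
  classical
  induction P using MvPolynomial.induction_on with
  | C a => simp [linearSubst]
  | add P Q hP hQ => simp only [map_add, hP, hQ, add_mul, Finset.sum_add_distrib]
  | mul_X P k hP =>
    have hX : linearSubst A (X k) = A.toMvPolynomial k := bind₁_X_right _ _
    simp only [map_mul, pderiv_mul, hP, hX, pderiv_toMvPolynomial, map_add, add_mul,
      Finset.sum_add_distrib, pderiv_X, Pi.single_apply, apply_ite (linearSubst A), map_zero,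
      mul_ite, mul_one, mul_zero, ite_mul, zero_mul]
    simp [Finset.sum_mul, mul_right_comm]

/-- The Hessian matrix of second partial derivatives of a polynomial. -/
noncomputable def hessian (P : MvPolynomial n R) : Matrix n n (MvPolynomial n R) :=
  Matrix.of fun i j => pderiv i (pderiv j P)

theorem hessian_linearSubst (A : Matrix n n R) (P : MvPolynomial n R) :
    hessian (linearSubst A P) =
      (A.map C).transpose * (hessian P).map (linearSubst A) * A.map C := by
  ext1 i j
  simp only [hessian, Matrix.of_apply, pderiv_linearSubst, map_sum, pderiv_mul, pderiv_C,
    mul_zero, add_zero, Matrix.mul_apply, Matrix.transpose_apply, Matrix.map_apply]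
  simp only [mul_comm]

theorem map_eval_hessian_linearSubst (A : Matrix n n R) (P : MvPolynomial n R) (v : n → R) :
    (hessian (linearSubst A P)).map (eval v) =
      A.transpose * (hessian P).map (eval (A.mulVec v)) * A := by
  ext i j
  simp [hessian_linearSubst, Matrix.mul_apply, eval_linearSubst]

theorem det_hessian_linearSubst [DecidableEq n] (A : Matrix n n R) (P : MvPolynomial n R) :
    (hessian (linearSubst A P)).det = C (A.det ^ 2) * linearSubst A (hessian P).det := by
  have hC : (A.map C).det = (C A.det : MvPolynomial n R) := (C.map_det A).symm
  have hL : ((hessian P).map (linearSubst A)).det = linearSubst A (hessian P).det :=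
    ((linearSubst A).map_det _).symm
  rw [hessian_linearSubst, Matrix.det_mul, Matrix.det_mul, Matrix.det_transpose, hC, hL, C_pow]
  ring

/-- A polynomial is invariant under a group `G` of matrices of determinant one if `P(A·x) = P(x)`
for all `A ∈ G`. -/
def IsInvariantUnder [DecidableEq n] (G : Subgroup (Matrix.SpecialLinearGroup n R))
    (P : MvPolynomial n R) : Prop :=
  ∀ A ∈ G, linearSubst (A : Matrix n n R) P = P

namespace IsInvariantUnder

variable [DecidableEq n] {G : Subgroup (Matrix.SpecialLinearGroup n R)} {P Q : MvPolynomial n R}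

theorem sub_C_mul (hP : IsInvariantUnder G P) (hQ : IsInvariantUnder G Q) (c : R) :
    IsInvariantUnder G (P - C c * Q) := fun A hA => by
  rw [map_sub, map_mul, hP A hA, hQ A hA, ← algebraMap_eq, AlgHom.commutes]

theorem of_mul_left [IsDomain R] (hP : IsInvariantUnder G P) (hPQ : IsInvariantUnder G (P * Q))
    (hP₀ : P ≠ 0) : IsInvariantUnder G Q := fun A hA =>
  mul_left_cancel₀ hP₀ <| by simpa only [map_mul, hP A hA] using hPQ A hA

theorem det_hessian (hP : IsInvariantUnder G P) : IsInvariantUnder G (hessian P).det :=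
  fun A hA => by
    simpa [hP A hA] using (det_hessian_linearSubst (A : Matrix n n R) P).symm

theorem eval_mulVec (hP : IsInvariantUnder G P) {A : Matrix.SpecialLinearGroup n R}
    (hA : A ∈ G) (v : n → R) : eval ((A : Matrix n n R).mulVec v) P = eval v P := by
  rw [← eval_linearSubst, hP A hA]

end IsInvariantUnder

end LinearSubstitution

section Homogeneous

variable {σ R : Type*} [CommRing R] {P Q : MvPolynomial σ R}

attribute [local instance] gradedAlgebra

theorem coe_decompose_homogeneousSubmodule (P : MvPolynomial σ R) (k : ℕ) :
    (DirectSum.decompose (homogeneousSubmodule σ R) P k : MvPolynomial σ R) =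
      homogeneousComponent k P :=
  decomposition.decompose'_apply P k

theorem exists_isHomogeneous_eq_mul_of_dvd {m k : ℕ} (hQ : Q.IsHomogeneous m)
    (hP : P.IsHomogeneous (m + k)) (h : Q ∣ P) : ∃ S, S.IsHomogeneous k ∧ P = Q * S := by
  obtain ⟨S, rfl⟩ := h
  refine ⟨homogeneousComponent k S, homogeneousComponent_isHomogeneous k S, ?_⟩
  have hcomponent := DirectSum.coe_decompose_mul_add_of_left_mem (homogeneousSubmodule σ R)
    (b := S) (j := k) hQ
  rwa [coe_decompose_homogeneousSubmodule, coe_decompose_homogeneousSubmodule,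
    homogeneousComponent_eq_self hP] at hcomponent

theorem eq_zero_of_isHomogeneous_of_dvd_of_lt {m k : ℕ} (hQ : Q.IsHomogeneous m)
    (hP : P.IsHomogeneous k) (h : Q ∣ P) (hkm : k < m) : P = 0 := by
  obtain ⟨S, rfl⟩ := h
  have hcomponent := DirectSum.coe_decompose_mul_of_left_mem_of_not_le (homogeneousSubmodule σ R)
    (b := S) hQ hkm.not_ge
  rwa [coe_decompose_homogeneousSubmodule, homogeneousComponent_eq_self hP] at hcomponent

theorem exists_eq_C_mul_of_dvd {m : ℕ} (hQ : Q.IsHomogeneous m)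
    (hP : P.IsHomogeneous m) (h : Q ∣ P) : ∃ c, P = C c * Q := by
  obtain ⟨S, hS, rfl⟩ := exists_isHomogeneous_eq_mul_of_dvd (k := 0) hQ hP h
  obtain ⟨c, rfl⟩ : ∃ c, S = C c :=
    ⟨_, totalDegree_eq_zero_iff_eq_C.mp ((totalDegree_zero_iff_isHomogeneous σ).mpr hS)⟩
  exact ⟨c, mul_comm _ _⟩

theorem isHomogeneous_ofNat_mul_X_pow_mul_X_pow (c : ℕ) [c.AtLeastTwo] (s t : σ) (i j : ℕ) :
    (ofNat(c) * X s ^ i * X t ^ j : MvPolynomial σ R).IsHomogeneous (i + j) := by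
  rw [← map_ofNat C c]
  exact (isHomogeneous_C_mul_X_pow _ _ _).mul (isHomogeneous_X_pow _ _)

theorem dvd_aeval_sub_aeval {S : Type*} [CommRing S] [Algebra R S] {f g : σ → S} {d : S}
    (h : ∀ i, d ∣ f i - g i) (P : MvPolynomial σ R) : d ∣ aeval f P - aeval g P := by
  induction P using MvPolynomial.induction_on with
  | C a => simp
  | add P Q hP hQ => simpa only [map_add, add_sub_add_comm] using dvd_add hP hQ
  | mul_X P i hP =>
    simpa only [map_mul, aeval_X] using dvd_mul_sub_mul hP (h i)

theorem aeval_smul_of_isHomogeneous {S : Type*} [CommRing S] [Algebra R S] {n : ℕ}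
    (hP : P.IsHomogeneous n) (c : S) (f : σ → S) : aeval (c • f) P = c ^ n * aeval f P := by
  simp only [aeval_def, eval₂_eq, Finset.mul_sum]
  refine Finset.sum_congr rfl fun d hd => ?_
  rw [hP.degree_eq_sum_deg_support hd]
  simp only [Pi.smul_apply, smul_eq_mul, mul_pow, Finset.prod_mul_distrib,
    Finset.prod_pow_eq_pow_sum]
  ring

theorem isRelPrime_X [IsDomain R] {i j : σ} (hij : i ≠ j) :
    IsRelPrime (X i : MvPolynomial σ R) (X j) :=
  X_prime.irreducible.isRelPrime_iff_not_dvd.mpr fun h => hij (X_dvd_X.mp h)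

end Homogeneous

section BinaryForms

variable {K : Type*} [Field K]

/-- The linear form in two variables vanishing on the line through the vector `v`. -/
noncomputable def lineForm (v : Fin 2 → K) : MvPolynomial (Fin 2) K :=
  C (v 0) * X 1 - C (v 1) * X 0

theorem isHomogeneous_lineForm (v : Fin 2 → K) : (lineForm v).IsHomogeneous 1 :=
  (isHomogeneous_C_mul_X _ _).sub (isHomogeneous_C_mul_X _ _)

theorem isRelPrime_lineForm {v w : Fin 2 → K} (h : v 0 * w 1 - v 1 * w 0 ≠ 0) :
    IsRelPrime (lineForm v) (lineForm w) := by
  intro d hv hw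
  have hunit : IsUnit (C (v 0 * w 1 - v 1 * w 0) : MvPolynomial (Fin 2) K) := h.isUnit.map C
  refine isRelPrime_X zero_ne_one (hunit.dvd_mul_left.mp ?_) (hunit.dvd_mul_left.mp ?_)
  · convert (hv.mul_left (C (w 0))).sub (hw.mul_left (C (v 0))) using 1
    simp only [lineForm, C_sub, C_mul]
    ring
  · convert (hv.mul_left (C (w 1))).sub (hw.mul_left (C (v 1))) using 1
    simp only [lineForm, C_sub, C_mul]
    ring

theorem lineForm_dvd {P : MvPolynomial (Fin 2) K} {n : ℕ} (hP : P.IsHomogeneous n)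
    {v : Fin 2 → K} (hv : v ≠ 0) (h : eval v P = 0) : lineForm v ∣ P := by
  obtain ⟨k, hk⟩ := Function.ne_iff.mp hv
  -- Modulo `lineForm v` the point `v k • (X 0, X 1)` agrees with `X k • v`, where `P` vanishes.
  have hcongr (i : Fin 2) : lineForm v ∣ ((C (v k) : MvPolynomial (Fin 2) K) • X) i -
      ((X k : MvPolynomial (Fin 2) K) • (C ∘ v)) i := by
    fin_cases k <;> fin_cases i
    · simp [mul_comm]
    · simp [lineForm, mul_comm]
    · rw [← dvd_neg]
      simp [lineForm, mul_comm]
    · simp [mul_comm]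
  have hdvd := dvd_aeval_sub_aeval hcongr P
  have hzero : aeval (C ∘ v : Fin 2 → MvPolynomial (Fin 2) K) P = 0 := by
    have := aeval_algebraMap_apply (MvPolynomial (Fin 2) K) v P
    rwa [aeval_eq_eval, h, map_zero] at this
  rw [aeval_smul_of_isHomogeneous hP, aeval_smul_of_isHomogeneous hP, hzero, mul_zero, sub_zero,
    aeval_X_left_apply, ← C_pow] at hdvd
  exact ((pow_ne_zero n hk).isUnit.map C).dvd_mul_left.mp hdvd

variable {ι : Type*} [Fintype ι] {v : ι → Fin 2 → K}

theorem isHomogeneous_prod_lineForm (v : ι → Fin 2 → K) :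
    (∏ i, lineForm (v i)).IsHomogeneous (Fintype.card ι) := by
  simpa using IsHomogeneous.prod Finset.univ _ _ fun i _ => isHomogeneous_lineForm (v i)

theorem prod_lineForm_dvd (hv : ∀ i, v i ≠ 0)
    (hpair : Pairwise fun i j => v i 0 * v j 1 - v i 1 * v j 0 ≠ 0)
    {P : MvPolynomial (Fin 2) K} {n : ℕ} (hP : P.IsHomogeneous n) (h : ∀ i, eval (v i) P = 0) :
    ∏ i, lineForm (v i) ∣ P :=
  Fintype.prod_dvd_of_isRelPrime (fun _ _ hij => isRelPrime_lineForm (hpair hij))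
    fun i => lineForm_dvd hP (hv i) (h i)

end BinaryForms

section LineOrbit

variable (R : Type*) [CommRing R]

/-- The subgroup of upper triangular matrices of `SL(2, R)`, that is, the stabilizer of the line
through `(1, 0)`. -/
def upperTriangular : Subgroup (Matrix.SpecialLinearGroup (Fin 2) R) where
  carrier := {A | A 1 0 = 0}
  one_mem' := by simp
  mul_mem' := by
    intro A B hA hB
    simp_all [Matrix.mul_apply]
  inv_mem' := by
    intro A hA
    simp_all [Matrix.SpecialLinearGroup.coe_inv, Matrix.adjugate_fin_two]

variable {R}

theorem mem_upperTriangular {A : Matrix.SpecialLinearGroup (Fin 2) R} :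
    A ∈ upperTriangular R ↔ A 1 0 = 0 :=
  Iff.rfl

theorem inv_mul_mem_upperTriangular {A B : Matrix.SpecialLinearGroup (Fin 2) R} :
    A⁻¹ * B ∈ upperTriangular R ↔ A 0 0 * B 1 0 - A 1 0 * B 0 0 = 0 := by
  simp [mem_upperTriangular, Matrix.mul_apply, Matrix.SpecialLinearGroup.coe_inv,
    Matrix.adjugate_fin_two, neg_add_eq_sub]

theorem mul_eq_one_of_mem_upperTriangular {A : Matrix.SpecialLinearGroup (Fin 2) R}
    (hA : A ∈ upperTriangular R) : A 0 0 * A 1 1 = 1 := by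
  have hdet := A.det_coe
  rwa [Matrix.det_fin_two, mem_upperTriangular.mp hA, mul_zero, sub_zero] at hdet

theorem mulVec_one_zero_of_mem_upperTriangular {A : Matrix.SpecialLinearGroup (Fin 2) R}
    (hA : A ∈ upperTriangular R) :
    (A : Matrix (Fin 2) (Fin 2) R).mulVec ![1, 0] = ![A 0 0, 0] := by
  ext i
  fin_cases i <;> simp [Matrix.mulVec, dotProduct, mem_upperTriangular.mp hA]

variable (G : Subgroup (Matrix.SpecialLinearGroup (Fin 2) R))

/-- The stabilizer in `G` of the line through `(1, 0)`. -/
abbrev lineStabilizer : Subgroup G :=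
  (upperTriangular R).subgroupOf G

variable {G}

/-- A representative of the line `A · (1, 0)`, for each coset `A` of the stabilizer of the line
through `(1, 0)`; the line does not depend on the representative of the coset, the vector does. -/
noncomputable def orbitVector (q : G ⧸ lineStabilizer G) : Fin 2 → R :=
  ((q.out : Matrix.SpecialLinearGroup (Fin 2) R) : Matrix (Fin 2) (Fin 2) R).mulVec ![1, 0]

theorem orbitVector_ne_zero [IsDomain R] (q : G ⧸ lineStabilizer G) : orbitVector q ≠ 0 := by
  intro h
  have hzero := Matrix.eq_zero_of_mulVec_eq_zero
    (Matrix.SpecialLinearGroup.det_ne_zero q.out.1) h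
  exact one_ne_zero (congrFun hzero 0)

theorem pairwise_orbitVector : Pairwise fun p q : G ⧸ lineStabilizer G =>
    orbitVector p 0 * orbitVector q 1 - orbitVector p 1 * orbitVector q 0 ≠ 0 := by
  intro p q hpq h
  refine hpq ?_
  rw [← p.out_eq', ← q.out_eq', QuotientGroup.eq, Subgroup.mem_subgroupOf]
  simpa [inv_mul_mem_upperTriangular, orbitVector, Matrix.mulVec, dotProduct] using h

theorem prod_lineForm_orbitVector_dvd {K : Type*} [Field K]
    {G : Subgroup (Matrix.SpecialLinearGroup (Fin 2) K)} [Fintype (G ⧸ lineStabilizer G)]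
    {P : MvPolynomial (Fin 2) K} {n : ℕ} (hP : P.IsHomogeneous n) (hinv : IsInvariantUnder G P)
    (h : eval ![1, 0] P = 0) : ∏ q : G ⧸ lineStabilizer G, lineForm (orbitVector q) ∣ P :=
  prod_lineForm_dvd orbitVector_ne_zero pairwise_orbitVector hP
    fun q => (hinv.eval_mulVec q.out.2 _).trans h

end LineOrbit

section KleinForms

theorem subst_mat_eq_linearSubst (A : Matrix.SpecialLinearGroup (Fin 2) ℂ)
    (P : MvPolynomial (Fin 2) ℂ) :
    subst (mat A) P = linearSubst (A : Matrix (Fin 2) (Fin 2) ℂ) P := by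
  refine congrArg (aeval · P) (funext fun i => ?_)
  simp [mat, Matrix.toMvPolynomial, ← C_mul_X_eq_monomial]

theorem isInvariantUnder_iff_subst {G : Subgroup (Matrix.SpecialLinearGroup (Fin 2) ℂ)}
    {P : MvPolynomial (Fin 2) ℂ} :
    IsInvariantUnder G P ↔ ∀ A ∈ G, subst (mat A) P = P := by
  simp only [IsInvariantUnder, subst_mat_eq_linearSubst]

theorem isHomogeneous_F : F.IsHomogeneous 12 :=
  ((isHomogeneous_X ℂ 0).mul (isHomogeneous_X ℂ 1)).mul
    (((isHomogeneous_X_pow 0 10).sub (isHomogeneous_ofNat_mul_X_pow_mul_X_pow 11 0 1 5 5)).sub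
      (isHomogeneous_X_pow 1 10))

theorem isHomogeneous_H : H.IsHomogeneous 20 :=
  ((((isHomogeneous_X_pow 0 20).add (isHomogeneous_ofNat_mul_X_pow_mul_X_pow 228 0 1 15 5)).add
    (isHomogeneous_ofNat_mul_X_pow_mul_X_pow 494 0 1 10 10)).sub
      (isHomogeneous_ofNat_mul_X_pow_mul_X_pow 228 0 1 5 15)).add (isHomogeneous_X_pow 1 20)

theorem eval_F_one_zero : eval ![1, 0] F = 0 := by
  simp [F]

theorem eval_H_one_zero : eval ![1, 0] H = 1 := by
  simp [H]

theorem F_ne_zero : F ≠ 0 := fun h => by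
  have := congrArg (eval ![1, 1]) h
  norm_num [F] at this

theorem hessian_F : hessian F =
    !![110 * X 0 ^ 9 * X 1 - 330 * X 0 ^ 4 * X 1 ^ 6,
        11 * X 0 ^ 10 - 396 * X 0 ^ 5 * X 1 ^ 5 - 11 * X 1 ^ 10;
      11 * X 0 ^ 10 - 396 * X 0 ^ 5 * X 1 ^ 5 - 11 * X 1 ^ 10,
        - 330 * X 0 ^ 6 * X 1 ^ 4 - 110 * X 0 * X 1 ^ 9] := by
  have hnum (i : Fin 2) (m : ℕ) [m.AtLeastTwo] :
      pderiv i (OfNat.ofNat m : MvPolynomial (Fin 2) ℂ) = 0 :=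
    (pderiv i).map_natCast m
  ext1 i j
  fin_cases i <;> fin_cases j <;>
    simp [hessian, F, pderiv_X, Pi.single_apply, hnum] <;> ring

theorem det_hessian_F : (hessian F).det = C (-121) * H := by
  have hC : (C (-121) : MvPolynomial (Fin 2) ℂ) = -121 := by
    rw [map_neg, map_ofNat]
  rw [hessian_F, Matrix.det_fin_two_of, hC, H]
  ring

variable {G : Subgroup (Matrix.SpecialLinearGroup (Fin 2) ℂ)}

theorem IsInvariantUnder.H_of_F (hF : IsInvariantUnder G F) : IsInvariantUnder G H :=
  .of_mul_left (P := C (-121)) (fun _ _ => bind₁_C_right _ _)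
    (det_hessian_F ▸ hF.det_hessian) (by simp)

theorem map_eval_hessian_F (z : ℂ) :
    (hessian F).map (eval ![z, 0]) = !![0, 11 * z ^ 10; 11 * z ^ 10, 0] := by
  rw [hessian_F]
  ext i j
  fin_cases i <;> fin_cases j <;> simp

theorem pow_eq_one_and_eq_zero_of_isInvariantUnder_F (hF : IsInvariantUnder G F)
    {A : Matrix.SpecialLinearGroup (Fin 2) ℂ} (hAG : A ∈ G) (hA : A ∈ upperTriangular ℂ) :
    A 0 0 ^ 10 = 1 ∧ A 0 1 = 0 := by
  have hdiag := mul_eq_one_of_mem_upperTriangular hA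
  have hhessian := map_eval_hessian_linearSubst (A : Matrix (Fin 2) (Fin 2) ℂ) F ![1, 0]
  rw [hF A hAG, mulVec_one_zero_of_mem_upperTriangular hA, map_eval_hessian_F,
    map_eval_hessian_F] at hhessian
  have hoffdiag : 11 = A 0 0 * (11 * A 0 0 ^ 10) * A 1 1 := by
    simpa [Matrix.mul_apply, mem_upperTriangular.mp hA] using congrFun₂ hhessian 0 1
  have hcorner : 0 = A 1 1 * (11 * A 0 0 ^ 10) * A 0 1 + A 0 1 * (11 * A 0 0 ^ 10) * A 1 1 := by
    simpa [Matrix.mul_apply] using congrFun₂ hhessian 1 1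
  have hpow : A 0 0 ^ 10 = 1 := by
    linear_combination -hoffdiag / 11 - A 0 0 ^ 10 * hdiag
  refine ⟨hpow, ?_⟩
  linear_combination -A 0 0 / 22 * hcorner - A 0 1 * (A 0 0 * A 1 1) * hpow - A 0 1 * hdiag

/-- The diagonal entry `ζ` of an element `diag(ζ, ζ⁻¹)` of the stabilizer of the line through
`(1, 0)`, as a tenth root of unity. -/
noncomputable def stabilizerEigenvalue (hF : IsInvariantUnder G F) (A : lineStabilizer G) :
    rootsOfUnity 10 ℂ :=
  rootsOfUnity.mkOfPowEq (A.1.1 0 0)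
    (pow_eq_one_and_eq_zero_of_isInvariantUnder_F hF A.1.2 A.2).1

theorem stabilizerEigenvalue_injective (hF : IsInvariantUnder G F) :
    Function.Injective (stabilizerEigenvalue hF) := by
  intro A B hAB
  have h00 : A.1.1 0 0 = B.1.1 0 0 := congrArg (fun ζ : rootsOfUnity 10 ℂ => ((ζ : ℂˣ) : ℂ)) hAB
  have h01 (D : lineStabilizer G) : D.1.1 0 1 = 0 :=
    (pow_eq_one_and_eq_zero_of_isInvariantUnder_F hF D.1.2 D.2).2
  have h10 (D : lineStabilizer G) : D.1.1 1 0 = 0 := mem_upperTriangular.mp D.2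
  have h11 (D : lineStabilizer G) : D.1.1 1 1 = (D.1.1 0 0)⁻¹ :=
    eq_inv_of_mul_eq_one_right (mul_eq_one_of_mem_upperTriangular D.2)
  ext i j
  fin_cases i <;> fin_cases j <;> simp [h00, h01, h10, h11]

theorem card_lineStabilizer_le (hF : IsInvariantUnder G F) : Nat.card (lineStabilizer G) ≤ 10 := by
  have := Nat.card_le_card_of_injective _ (stabilizerEigenvalue_injective hF)
  rwa [Complex.card_rootsOfUnity] at this

theorem index_lineStabilizer_le [Finite G] (hF : IsInvariantUnder G F) :
    (lineStabilizer G).index ≤ 12 := by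
  have := Fintype.ofFinite (G ⧸ lineStabilizer G)
  rw [Subgroup.index, Nat.card_eq_fintype_card]
  by_contra! hlt
  exact F_ne_zero (eq_zero_of_isHomogeneous_of_dvd_of_lt (isHomogeneous_prod_lineForm _)
    isHomogeneous_F (prod_lineForm_orbitVector_dvd isHomogeneous_F hF eval_F_one_zero) hlt)

theorem card_lineStabilizer_and_index (hG : Nat.card G = 120) (hF : IsInvariantUnder G F) :
    Nat.card (lineStabilizer G) = 10 ∧ (lineStabilizer G).index = 12 := by
  have : Finite G := Nat.finite_of_card_ne_zero (by simp [hG])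
  have hmul := (lineStabilizer G).card_mul_index
  have hcard := card_lineStabilizer_le hF
  have hindex := index_lineStabilizer_le hF
  rw [hG] at hmul
  constructor <;> nlinarith

theorem exists_isPrimitiveRoot_mulVec_eq (hG : Nat.card G = 120) (hF : IsInvariantUnder G F) :
    ∃ A ∈ G, ∃ ζ : ℂ, IsPrimitiveRoot ζ 10 ∧
      (A : Matrix (Fin 2) (Fin 2) ℂ).mulVec ![1, 0] = ζ • ![1, 0] := by
  have hbij : Function.Bijective (stabilizerEigenvalue hF) :=
    (stabilizerEigenvalue_injective hF).bijective_of_nat_card_le <| by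
      rw [(card_lineStabilizer_and_index hG hF).1, Complex.card_rootsOfUnity]
  have hζ := Complex.isPrimitiveRoot_exp 10 (by norm_num)
  obtain ⟨A, hA⟩ := hbij.surjective (rootsOfUnity.mkOfPowEq _ hζ.pow_eq_one)
  refine ⟨A, A.1.2, _, hζ, ?_⟩
  have h00 : A.1.1 0 0 = _ := congrArg (fun ζ : rootsOfUnity 10 ℂ => ((ζ : ℂˣ) : ℂ)) hA
  rw [mulVec_one_zero_of_mem_upperTriangular (Subgroup.mem_subgroupOf.mp A.2), h00]
  simp

theorem eval_one_zero_eq_zero_of_not_dvd (hG : Nat.card G = 120) (hF : IsInvariantUnder G F)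
    {P : MvPolynomial (Fin 2) ℂ} {n : ℕ} (hP : P.IsHomogeneous n) (hinv : IsInvariantUnder G P)
    (hn : ¬ 10 ∣ n) : eval ![1, 0] P = 0 := by
  obtain ⟨A, hA, ζ, hζ, hmulVec⟩ := exists_isPrimitiveRoot_mulVec_eq hG hF
  have heval := hinv.eval_mulVec hA ![1, 0]
  rw [hmulVec, ← aeval_eq_eval, aeval_smul_of_isHomogeneous hP] at heval
  by_contra hne
  exact hn (hζ.dvd_of_pow_eq_one n (mul_right_cancel₀ hne (heval.trans (one_mul _).symm)))

theorem F_dvd (hG : Nat.card G = 120) (hF : IsInvariantUnder G F)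
    {P : MvPolynomial (Fin 2) ℂ} {n : ℕ} (hP : P.IsHomogeneous n) (hinv : IsInvariantUnder G P)
    (h : eval ![1, 0] P = 0) : F ∣ P := by
  have : Finite G := Nat.finite_of_card_ne_zero (by simp [hG])
  have := Fintype.ofFinite (G ⧸ lineStabilizer G)
  have hdeg : Fintype.card (G ⧸ lineStabilizer G) = 12 := by
    rw [← Nat.card_eq_fintype_card]
    exact (card_lineStabilizer_and_index hG hF).2
  obtain ⟨c, hc⟩ := exists_eq_C_mul_of_dvd (hdeg ▸ isHomogeneous_prod_lineForm _) isHomogeneous_F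
    (prod_lineForm_orbitVector_dvd isHomogeneous_F hF eval_F_one_zero)
  have hc₀ : c ≠ 0 := fun h₀ => F_ne_zero (by rw [hc, h₀, C_0, zero_mul])
  rw [hc, (hc₀.isUnit.map C).mul_left_dvd]
  exact prod_lineForm_orbitVector_dvd hP hinv h

end KleinForms

/-- For any order-120 subgroup `G` of `SL(2,ℂ)` leaving `F` invariant (the binary
icosahedral group): every `G`-invariant homogeneous polynomial of degree 12 is a scalar
multiple of `F`, and every `G`-invariant homogeneous polynomial of degree 20 is a
scalar multiple of `H`. -/
theorem invariants_in_degrees_12_and_20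
    (G : Subgroup (Matrix.SpecialLinearGroup (Fin 2) ℂ)) (hcard : Nat.card G = 120)
    (hF : ∀ A ∈ G, subst (mat A) F = F) :
    (∀ P : MvPolynomial (Fin 2) ℂ, P.IsHomogeneous 12 →
      (∀ A ∈ G, subst (mat A) P = P) → ∃ c : ℂ, P = C c * F) ∧
    (∀ P : MvPolynomial (Fin 2) ℂ, P.IsHomogeneous 20 →
      (∀ A ∈ G, subst (mat A) P = P) → ∃ c : ℂ, P = C c * H) := by
  simp only [← isInvariantUnder_iff_subst] at hF ⊢
  constructor <;> intro P hP hinv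
  · exact exists_eq_C_mul_of_dvd isHomogeneous_F hP
      (F_dvd hcard hF hP hinv (eval_one_zero_eq_zero_of_not_dvd hcard hF hP hinv (by norm_num)))
  · set R := P - C (eval ![1, 0] P) * H with hR
    have hRhom : R.IsHomogeneous 20 := hP.sub (isHomogeneous_H.C_mul _)
    have hRinv : IsInvariantUnder G R := hinv.sub_C_mul hF.H_of_F _
    have hRzero : eval ![1, 0] R = 0 := by simp [hR, eval_H_one_zero]
    obtain ⟨Q, hQ, hRQ⟩ := exists_isHomogeneous_eq_mul_of_dvd (k := 8) isHomogeneous_F hRhom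
      (F_dvd hcard hF hRhom hRinv hRzero)
    have hQinv : IsInvariantUnder G Q := hF.of_mul_left (hRQ ▸ hRinv) F_ne_zero
    have hdvd : F ∣ Q := F_dvd hcard hF hQ hQinv
      (eval_one_zero_eq_zero_of_not_dvd hcard hF hQ hQinv (by norm_num))
    have hQzero : Q = 0 :=
      eq_zero_of_isHomogeneous_of_dvd_of_lt isHomogeneous_F hQ hdvd (by norm_num)
    exact ⟨eval ![1, 0] P, sub_eq_zero.mp (by rw [← hR, hRQ, hQzero, mul_zero])⟩
end
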